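/- arXiv:math/0507398 — 6 statements merged into one kernel-verified Lean document; each statement's English description precedes it below -/
import Mathlib

section
/- Let τ be a symplectic (i.e. alternating and nondegenerate) bilinear form on ⋀³V such that τ(x,y) = 0 for every nonzero v ∈ V and all x, y ∈ F_v. Then there exists a nonzero constant c ∈ ℂ with τ = c·σ. -/
open ExteriorAlgebra

/-- The subspace `F_v = v ∧ ⋀²V = {v∧β : β ∈ ⋀²V}` of `⋀³V`, as a submodule of the
exterior algebra. -/
noncomputable def Fsub {V : Type*} [AddCommGroup V] [Module ℂ V] (v : V) :
    Submodule ℂ (ExteriorAlgebra ℂ V) :=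
  (⋀[ℂ]^2 V).map (LinearMap.mulLeft ℂ (ExteriorAlgebra.ι ℂ v))

/-- A decomposable trivector lies in `F_v` for each of its factors `v`. -/
theorem ιMulti_mem_Fsub {V : Type*} [AddCommGroup V] [Module ℂ V] (a : Fin 3 → V) (i : Fin 3) :
    ((exteriorPower.ιMulti ℂ 3 a : ⋀[ℂ]^3 V) : ExteriorAlgebra ℂ V) ∈ Fsub (a i) := by
  have key : ∀ b : Fin 3 → V,
      ((exteriorPower.ιMulti ℂ 3 b : ⋀[ℂ]^3 V) : ExteriorAlgebra ℂ V) ∈ Fsub (b 0) := by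
    intro b
    refine ⟨_, (exteriorPower.ιMulti ℂ 2 (Matrix.vecTail b)).2, ?_⟩
    simp [exteriorPower.ιMulti_apply_coe, ExteriorAlgebra.ιMulti_succ_apply]
  by_cases hi : i = 0
  · subst hi; exact key a
  · have h := key (a ∘ Equiv.swap 0 i)
    rw [AlternatingMap.map_swap _ _ (Ne.symm hi)] at h
    simpa using h

/-- The six-linear alternating map attached to `τ`. -/
noncomputable def sixAlt {V : Type*} [AddCommGroup V] [Module ℂ V]
    (τ : ↥(⋀[ℂ]^3 V) →ₗ[ℂ] ↥(⋀[ℂ]^3 V) →ₗ[ℂ] ℂ)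
    (hF : ∀ a b : Fin 3 → V, ∀ i j, a i = b j →
      τ (exteriorPower.ιMulti ℂ 3 a) (exteriorPower.ιMulti ℂ 3 b) = 0) :
    V [⋀^Fin (3 + 3)]→ₗ[ℂ] ℂ :=
  { ((TensorProduct.lift τ).compMultilinearMap
      (MultilinearMap.domCoprod (exteriorPower.ιMulti ℂ 3 (M := V)).toMultilinearMap
        (exteriorPower.ιMulti ℂ 3 (M := V)).toMultilinearMap)).domDomCongr finSumFinEquiv with
    map_eq_zero_of_eq' := by
      intro v i j hv hij
      change τ (exteriorPower.ιMulti ℂ 3 fun k => v (finSumFinEquiv (Sum.inl k)))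
        (exteriorPower.ιMulti ℂ 3 fun k => v (finSumFinEquiv (Sum.inr k))) = 0
      obtain ⟨i, rfl⟩ := finSumFinEquiv.surjective i
      obtain ⟨j, rfl⟩ := finSumFinEquiv.surjective j
      rcases i with i | i <;> rcases j with j | j
      · rw [AlternatingMap.map_eq_zero_of_eq _ _ (i := i) (j := j) hv (by rintro rfl; exact hij rfl)]
        simp
      · exact hF _ _ i j hv
      · exact hF _ _ j i hv.symm
      · rw [AlternatingMap.map_eq_zero_of_eq _ (fun k => v (finSumFinEquiv (Sum.inr k)))
          (i := i) (j := j) hv (by rintro rfl; exact hij rfl)]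
        simp }

theorem sixAlt_apply {V : Type*} [AddCommGroup V] [Module ℂ V]
    (τ : ↥(⋀[ℂ]^3 V) →ₗ[ℂ] ↥(⋀[ℂ]^3 V) →ₗ[ℂ] ℂ)
    (hF : ∀ a b : Fin 3 → V, ∀ i j, a i = b j →
      τ (exteriorPower.ιMulti ℂ 3 a) (exteriorPower.ιMulti ℂ 3 b) = 0) (a b : Fin 3 → V) :
    sixAlt τ hF (Fin.append a b) =
      τ (exteriorPower.ιMulti ℂ 3 a) (exteriorPower.ιMulti ℂ 3 b) := by
  change τ (exteriorPower.ιMulti ℂ 3 fun k => Fin.append a b (finSumFinEquiv (Sum.inl k)))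
    (exteriorPower.ιMulti ℂ 3 fun k => Fin.append a b (finSumFinEquiv (Sum.inr k))) = _
  have h1 : (fun k => Fin.append a b (finSumFinEquiv (Sum.inl k))) = a :=
    funext fun k => Fin.append_left a b k
  have h2 : (fun k => Fin.append a b (finSumFinEquiv (Sum.inr k))) = b :=
    funext fun k => Fin.append_right a b k
  rw [h1, h2]

/-- If `τ` is a symplectic (alternating, nondegenerate) bilinear form on
`⋀³V` vanishing on `F_v × F_v` for every nonzero `v ∈ V`, then `τ = c·σ` for some
nonzero constant `c`, where `σ(x,y) = vol(x∧y)`. -/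
theorem stmt5 (V : Type*) [AddCommGroup V] [Module ℂ V] [FiniteDimensional ℂ V]
    (hV : Module.finrank ℂ V = 6)
    (vol : ExteriorAlgebra ℂ V →ₗ[ℂ] ℂ)
    (hvol : Function.Bijective fun x : ⋀[ℂ]^6 V => vol x)
    (τ : ↥(⋀[ℂ]^3 V) →ₗ[ℂ] ↥(⋀[ℂ]^3 V) →ₗ[ℂ] ℂ)
    (halt : ∀ x, τ x x = 0)
    (hnd : ∀ x, (∀ y, τ x y = 0) → x = 0)
    (hF : ∀ v : V, v ≠ 0 → ∀ x y : ↥(⋀[ℂ]^3 V),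
      (x : ExteriorAlgebra ℂ V) ∈ Fsub v → (y : ExteriorAlgebra ℂ V) ∈ Fsub v →
        τ x y = 0) :
    ∃ c : ℂ, c ≠ 0 ∧ ∀ x y : ↥(⋀[ℂ]^3 V),
      τ x y = c * vol ((x : ExteriorAlgebra ℂ V) * (y : ExteriorAlgebra ℂ V)) := by
  have hF' : ∀ a b : Fin 3 → V, ∀ i j, a i = b j →
      τ (exteriorPower.ιMulti ℂ 3 a) (exteriorPower.ιMulti ℂ 3 b) = 0 := by
    intro a b i j hab
    by_cases h0 : a i = 0
    · rw [AlternatingMap.map_coord_zero _ i h0]; simp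
    · exact hF (a i) h0 _ _ (ιMulti_mem_Fsub a i) (hab ▸ ιMulti_mem_Fsub b j)
  let φ : ⋀[ℂ]^6 V →ₗ[ℂ] ℂ := exteriorPower.alternatingMapLinearEquiv (sixAlt τ hF')
  obtain ⟨u, hu⟩ := hvol.2 1
  have hu : vol u = 1 := hu
  have hφ : ∀ w : ⋀[ℂ]^6 V, φ w = φ u * vol w := by
    intro w
    have : w = (vol w) • u := by
      apply hvol.1
      simp [hu]
    conv_lhs => rw [this]
    simp [mul_comm]
  have main : ∀ x y : ↥(⋀[ℂ]^3 V),
      τ x y = φ u * vol ((x : ExteriorAlgebra ℂ V) * (y : ExteriorAlgebra ℂ V)) := by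
    let σ : ↥(⋀[ℂ]^3 V) →ₗ[ℂ] ↥(⋀[ℂ]^3 V) →ₗ[ℂ] ℂ :=
      φ u • ((LinearMap.mul ℂ (ExteriorAlgebra ℂ V)).compr₂ vol).compl₁₂
        (⋀[ℂ]^3 V).subtype (⋀[ℂ]^3 V).subtype
    suffices h : τ = σ by
      intro x y
      rw [h]; simp [σ]
    apply exteriorPower.linearMap_ext
    ext a : 1
    apply exteriorPower.linearMap_ext
    ext b : 1
    have h1 := sixAlt_apply τ hF' a b
    have h2 : φ (exteriorPower.ιMulti ℂ 6 (Fin.append a b)) = sixAlt τ hF' (Fin.append a b) :=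
      exteriorPower.alternatingMapLinearEquiv_apply_ιMulti _ _
    have h3 : ((exteriorPower.ιMulti ℂ 6 (Fin.append a b) : ⋀[ℂ]^6 V) : ExteriorAlgebra ℂ V)
        = (exteriorPower.ιMulti ℂ 3 a : ⋀[ℂ]^3 V) * (exteriorPower.ιMulti ℂ 3 b : ⋀[ℂ]^3 V) := by
      simp only [exteriorPower.ιMulti_apply_coe, ExteriorAlgebra.ιMulti_apply]
      rw [← List.prod_append, ← List.ofFn_fin_append]
      congr 2
      ext k
      refine Fin.addCases (m := 3) (n := 3) (fun k => ?_) (fun k => ?_) k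
      · rw [Fin.append_left, Fin.append_left]
      · rw [Fin.append_right, Fin.append_right]
    rw [hφ, h1, h3] at h2
    simpa [σ] using h2.symm
  refine ⟨φ u, ?_, main⟩
  intro hc
  have hz : ∀ x : ⋀[ℂ]^3 V, x = 0 := fun x => hnd x fun y => by rw [main, hc, zero_mul]
  have hb : (⋀[ℂ]^3 V) = ⊥ := by
    rw [Submodule.eq_bot_iff]
    intro x hx
    exact congrArg Subtype.val (hz ⟨x, hx⟩)
  have hb6 : (⋀[ℂ]^6 V) = ⊥ := by
    change LinearMap.range (ExteriorAlgebra.ι ℂ (M := V)) ^ (3 + 3) = ⊥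
    change LinearMap.range (ExteriorAlgebra.ι ℂ (M := V)) ^ 3 = ⊥ at hb
    rw [pow_add, hb, Submodule.bot_mul]
  have : (u : ExteriorAlgebra ℂ V) = 0 := by
    have h : (u : ExteriorAlgebra ℂ V) ∈ (⊥ : Submodule ℂ (ExteriorAlgebra ℂ V)) :=
      hb6.le u.2
    simpa using h
  rw [this] at hu
  simp at hu
end

section
/- Let v₀ ∈ V be nonzero and let V₀ ⊂ V be a 5-dimensional subspace with V = ℂv₀ ⊕ V₀. Let W ⊆ ⋀²V₀ be a subspace with dim W ≤ 2. For τ ∈ V₀ define the symmetric bilinear form b_τ on W by b_τ(α,β) = vol(v₀∧τ∧α∧β). Then the linear map V₀ → {symmetric bilinear forms on W}, τ ↦ b_τ, is surjective if and only if W contains no nonzero decomposable element, i.e. no nonzero element of the form u∧u' with u, u' ∈ V₀. -/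
open ExteriorAlgebra

/-- The image of `⋀ᵏW` in the exterior algebra of `V`, for a subspace `W ⊆ V`. -/
noncomputable def extSub {V : Type*} [AddCommGroup V] [Module ℂ V]
    (W : Submodule ℂ V) (k : ℕ) : Submodule ℂ (ExteriorAlgebra ℂ V) :=
  (⋀[ℂ]^k ↥W).map (ExteriorAlgebra.map W.subtype).toLinearMap

set_option linter.unusedSimpArgs false

def pP1 (a b : Fin 10 → ℂ) : ℂ :=
  a 4 * b 9 - a 5 * b 8 + a 6 * b 7 + (b 4 * a 9 - b 5 * a 8 + b 6 * a 7)
def pP2 (a b : Fin 10 → ℂ) : ℂ :=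
  a 1 * b 9 - a 2 * b 8 + a 3 * b 7 + (b 1 * a 9 - b 2 * a 8 + b 3 * a 7)
def pP3 (a b : Fin 10 → ℂ) : ℂ :=
  a 0 * b 9 - a 2 * b 6 + a 3 * b 5 + (b 0 * a 9 - b 2 * a 6 + b 3 * a 5)
def pP4 (a b : Fin 10 → ℂ) : ℂ :=
  a 0 * b 8 - a 1 * b 6 + a 3 * b 4 + (b 0 * a 8 - b 1 * a 6 + b 3 * a 4)
def pP5 (a b : Fin 10 → ℂ) : ℂ :=
  a 0 * b 7 - a 1 * b 5 + a 2 * b 4 + (b 0 * a 7 - b 1 * a 5 + b 2 * a 4)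

def pPhi {A : Type*} [Ring A] [Algebra ℂ A] (e : Fin 5 → A) (a : Fin 10 → ℂ) : A :=
  a 0 • (e 0 * e 1) + a 1 • (e 0 * e 2) + a 2 • (e 0 * e 3) + a 3 • (e 0 * e 4)
  + a 4 • (e 1 * e 2) + a 5 • (e 1 * e 3) + a 6 • (e 1 * e 4)
  + a 7 • (e 2 * e 3) + a 8 • (e 2 * e 4) + a 9 • (e 3 * e 4)

def pW (u v : Fin 5 → ℂ) : Fin 10 → ℂ :=
  ![u 0 * v 1 - u 1 * v 0, u 0 * v 2 - u 2 * v 0, u 0 * v 3 - u 3 * v 0, u 0 * v 4 - u 4 * v 0,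
    u 1 * v 2 - u 2 * v 1, u 1 * v 3 - u 3 * v 1, u 1 * v 4 - u 4 * v 1,
    u 2 * v 3 - u 3 * v 2, u 2 * v 4 - u 4 * v 2, u 3 * v 4 - u 4 * v 3]

lemma pPhi_mul {A : Type*} [Ring A] [Algebra ℂ A] (e : Fin 5 → A)
    (h0 : ∀ i, e i * e i = 0) (h1 : ∀ i j, j < i → e i * e j = - (e j * e i))
    (a b : Fin 10 → ℂ) :
    pPhi e a * pPhi e b = pP1 a b • (e 1 * (e 2 * (e 3 * e 4))) + pP2 a b • (e 0 * (e 2 * (e 3 * e 4)))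
     + pP3 a b • (e 0 * (e 1 * (e 3 * e 4))) + pP4 a b • (e 0 * (e 1 * (e 2 * e 4)))
     + pP5 a b • (e 0 * (e 1 * (e 2 * e 3))) := by
  have h0' : ∀ i x, e i * (e i * x) = 0 := fun i x => by rw [← mul_assoc, h0, zero_mul]
  have h1' : ∀ i j x, j < i → e i * (e j * x) = - (e j * (e i * x)) := fun i j x h => by
    rw [← mul_assoc, h1 i j h, neg_mul, mul_assoc]
  unfold pPhi pP1 pP2 pP3 pP4 pP5
  simp only [mul_add, add_mul, smul_mul_assoc, mul_smul_comm, mul_assoc]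
  simp only [h0, h0', h1 1 0 (by decide), h1 2 0 (by decide), h1 3 0 (by decide), h1 4 0 (by decide),
    h1 2 1 (by decide), h1 3 1 (by decide), h1 4 1 (by decide), h1 3 2 (by decide), h1 4 2 (by decide),
    h1 4 3 (by decide), h1' 1 0 _ (by decide), h1' 2 0 _ (by decide), h1' 3 0 _ (by decide), h1' 4 0 _ (by decide),
    h1' 2 1 _ (by decide), h1' 3 1 _ (by decide), h1' 4 1 _ (by decide), h1' 3 2 _ (by decide), h1' 4 2 _ (by decide),
    h1' 4 3 _ (by decide), mul_neg, neg_neg, mul_zero, smul_zero, neg_zero, add_zero, zero_add]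
  module

lemma pTau_mul {A : Type*} [Ring A] [Algebra ℂ A] (e : Fin 5 → A)
    (h0 : ∀ i, e i * e i = 0) (h1 : ∀ i j, j < i → e i * e j = - (e j * e i))
    (t : Fin 5 → ℂ) (a b : Fin 10 → ℂ) :
    (∑ i, t i • e i) * (pPhi e a * pPhi e b) = 
    (t 0 * pP1 a b - t 1 * pP2 a b + t 2 * pP3 a b - t 3 * pP4 a b + t 4 * pP5 a b) • 
      (e 0 * (e 1 * (e 2 * (e 3 * e 4)))) := by
  rw [pPhi_mul e h0 h1]
  have h0' : ∀ i x, e i * (e i * x) = 0 := fun i x => by rw [← mul_assoc, h0, zero_mul]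
  have h1' : ∀ i j x, j < i → e i * (e j * x) = - (e j * (e i * x)) := fun i j x h => by
    rw [← mul_assoc, h1 i j h, neg_mul, mul_assoc]
  simp only [Fin.sum_univ_five, mul_add, add_mul, smul_mul_assoc, mul_smul_comm, mul_assoc]
  simp only [h0, h0', h1 1 0 (by decide), h1 2 0 (by decide), h1 3 0 (by decide), h1 4 0 (by decide),
    h1 2 1 (by decide), h1 3 1 (by decide), h1 4 1 (by decide), h1 3 2 (by decide), h1 4 2 (by decide),
    h1 4 3 (by decide), h1' 1 0 _ (by decide), h1' 2 0 _ (by decide), h1' 3 0 _ (by decide), h1' 4 0 _ (by decide),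
    h1' 2 1 _ (by decide), h1' 3 1 _ (by decide), h1' 4 1 _ (by decide), h1' 3 2 _ (by decide), h1' 4 2 _ (by decide),
    h1' 4 3 _ (by decide), mul_neg, neg_neg, mul_zero, smul_zero, neg_zero, add_zero, zero_add]
  module

lemma pPhi_pW {A : Type*} [Ring A] [Algebra ℂ A] (e : Fin 5 → A)
    (h0 : ∀ i, e i * e i = 0) (h1 : ∀ i j, j < i → e i * e j = - (e j * e i))
    (u v : Fin 5 → ℂ) :
    (∑ i, u i • e i) * (∑ i, v i • e i) = pPhi e (pW u v) := by
  simp only [Fin.sum_univ_five, mul_add, add_mul, smul_mul_assoc, mul_smul_comm, pPhi, pW]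
  simp only [h0, h1 1 0 (by decide), h1 2 0 (by decide), h1 3 0 (by decide), h1 4 0 (by decide),
    h1 2 1 (by decide), h1 3 1 (by decide), h1 4 1 (by decide), h1 3 2 (by decide), h1 4 2 (by decide),
    h1 4 3 (by decide), Matrix.cons_val]
  module

lemma pPhi_add {A : Type*} [Ring A] [Algebra ℂ A] (e : Fin 5 → A) (a b : Fin 10 → ℂ) :
    pPhi e (a + b) = pPhi e a + pPhi e b := by
  simp only [pPhi, Pi.add_apply]; module

lemma pPhi_smul {A : Type*} [Ring A] [Algebra ℂ A] (e : Fin 5 → A) (c : ℂ) (a : Fin 10 → ℂ) :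
    pPhi e (c • a) = c • pPhi e a := by
  simp only [pPhi, Pi.smul_apply, smul_eq_mul]; module

def pAll (a b : Fin 10 → ℂ) : Fin 5 → ℂ := ![pP1 a b, - pP2 a b, pP3 a b, - pP4 a b, pP5 a b]

set_option maxHeartbeats 4000000 in
/-- Pluecker relations imply decomposability. -/
lemma p_decomp (a : Fin 10 → ℂ) (h : pAll a a = 0) : ∃ u v, a = pW u v := by
  have e1 : pP1 a a = 0 := by simpa [pAll] using congrFun h 0
  have e2 : pP2 a a = 0 := by simpa [pAll] using congrFun h 1
  have e3 : pP3 a a = 0 := by simpa [pAll] using congrFun h 2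
  have e4 : pP4 a a = 0 := by simpa [pAll] using congrFun h 3
  have e5 : pP5 a a = 0 := by simpa [pAll] using congrFun h 4
  unfold pP1 at e1; unfold pP2 at e2; unfold pP3 at e3; unfold pP4 at e4; unfold pP5 at e5
  by_cases ha : a = 0
  · refine ⟨0, 0, ?_⟩
    subst ha
    ext i; fin_cases i <;> simp [pW]
  let M : Fin 5 → Fin 5 → ℂ := ![![0, a 0, a 1, a 2, a 3], ![-a 0, 0, a 4, a 5, a 6],
    ![-a 1, -a 4, 0, a 7, a 8], ![-a 2, -a 5, -a 7, 0, a 9], ![-a 3, -a 6, -a 8, -a 9, 0]]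
  obtain ⟨i, hi⟩ := Function.ne_iff.mp ha
  have key : ∀ r s : Fin 5, M r s ≠ 0 → (∀ k, M r s * a k = pW (M r) (M s) k) →
      ∃ u v, a = pW u v := by
    intro r s hrs hk
    refine ⟨fun k => (M r s)⁻¹ * M r k, M s, ?_⟩
    ext k
    have h2 : M r s * pW (fun k => (M r s)⁻¹ * M r k) (M s) k = pW (M r) (M s) k := by
      fin_cases k <;> simp [pW] <;> field_simp
    exact mul_left_cancel₀ hrs ((hk k).trans h2.symm)
  clear ha h
  fin_cases i
  · exact key 0 1 hi (by intro k; clear key hi; fin_cases k <;> simp [pW, M] <;> grind)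
  · exact key 0 2 hi (by intro k; clear key hi; fin_cases k <;> simp [pW, M] <;> grind)
  · exact key 0 3 hi (by intro k; clear key hi; fin_cases k <;> simp [pW, M] <;> grind)
  · exact key 0 4 hi (by intro k; clear key hi; fin_cases k <;> simp [pW, M] <;> grind)
  · exact key 1 2 hi (by intro k; clear key hi; fin_cases k <;> simp [pW, M] <;> grind)
  · exact key 1 3 hi (by intro k; clear key hi; fin_cases k <;> simp [pW, M] <;> grind)
  · exact key 1 4 hi (by intro k; clear key hi; fin_cases k <;> simp [pW, M] <;> grind)
  · exact key 2 3 hi (by intro k; clear key hi; fin_cases k <;> simp [pW, M] <;> grind)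
  · exact key 2 4 hi (by intro k; clear key hi; fin_cases k <;> simp [pW, M] <;> grind)
  · exact key 3 4 hi (by intro k; clear key hi; fin_cases k <;> simp [pW, M] <;> grind)

set_option maxHeartbeats 4000000 in
lemma p_par (a b : Fin 10 → ℂ) (h : pAll a b = 0) (i j : Fin 5) :
    pAll a a i * pAll b b j = pAll a a j * pAll b b i := by
  have e1 : pP1 a b = 0 := by simpa [pAll] using congrFun h 0
  have e2 : pP2 a b = 0 := by simpa [pAll] using congrFun h 1
  have e3 : pP3 a b = 0 := by simpa [pAll] using congrFun h 2
  have e4 : pP4 a b = 0 := by simpa [pAll] using congrFun h 3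
  have e5 : pP5 a b = 0 := by simpa [pAll] using congrFun h 4
  have r1 : a 0 * -pP2 b b + a 1 * pP3 b b + a 2 * -pP4 b b + a 3 * pP5 b b = 0 := by
    trans -2 * (b 0 * -pP2 a b + b 1 * pP3 a b + b 2 * -pP4 a b + b 3 * pP5 a b)
    · simp only [pP1, pP2, pP3, pP4, pP5]; ring
    · simp [*]
  have r2 : -a 0 * pP1 b b + a 4 * pP3 b b + a 5 * -pP4 b b + a 6 * pP5 b b = 0 := by
    trans -2 * (-b 0 * pP1 a b + b 4 * pP3 a b + b 5 * -pP4 a b + b 6 * pP5 a b)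
    · simp only [pP1, pP2, pP3, pP4, pP5]; ring
    · simp [*]
  have r3 : -a 1 * pP1 b b - a 4 * -pP2 b b + a 7 * -pP4 b b + a 8 * pP5 b b = 0 := by
    trans -2 * (-b 1 * pP1 a b - b 4 * -pP2 a b + b 7 * -pP4 a b + b 8 * pP5 a b)
    · simp only [pP1, pP2, pP3, pP4, pP5]; ring
    · simp [*]
  have r4 : -a 2 * pP1 b b - a 5 * -pP2 b b - a 7 * pP3 b b + a 9 * pP5 b b = 0 := by
    trans -2 * (-b 2 * pP1 a b - b 5 * -pP2 a b - b 7 * pP3 a b + b 9 * pP5 a b)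
    · simp only [pP1, pP2, pP3, pP4, pP5]; ring
    · simp [*]
  have r5 : -a 3 * pP1 b b - a 6 * -pP2 b b - a 8 * pP3 b b - a 9 * -pP4 b b = 0 := by
    trans -2 * (-b 3 * pP1 a b - b 6 * -pP2 a b - b 8 * pP3 a b - b 9 * -pP4 a b)
    · simp only [pP1, pP2, pP3, pP4, pP5]; ring
    · simp [*]
  clear e1 e2 e3 e4 e5 h
  simp only [pAll]
  generalize pP1 b b = x1 at *
  generalize pP2 b b = x2 at *
  generalize pP3 b b = x3 at *
  generalize pP4 b b = x4 at *
  generalize pP5 b b = x5 at *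
  unfold pP1 pP2 pP3 pP4 pP5
  fin_cases i <;> fin_cases j <;> simp <;> grind

lemma p_factor (r s t : ℂ) (h : ¬ (r = 0 ∧ s = 0 ∧ t = 0)) :
    ∃ m n m' n' : ℂ, r = m * m' ∧ s = m * n' + n * m' ∧ t = n * n' ∧
      ¬ (m = 0 ∧ n = 0) ∧ ¬ (m' = 0 ∧ n' = 0) := by
  by_cases hr : r = 0
  · subst hr
    refine ⟨0, 1, s, t, by simp, by simp, by simp, by simp, by simpa using h⟩
  · obtain ⟨d, hd⟩ := IsAlgClosed.exists_pow_nat_eq (s ^ 2 - 4 * r * t) (n := 2) (by norm_num)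
    refine ⟨r, (s - d) / 2, 1, (s + d) / (2 * r), by simp, by field_simp; ring, ?_, by simp [hr], by simp⟩
    field_simp
    linear_combination hd

lemma p_abstract {W T : Type*} [AddCommGroup W] [Module ℂ W] [FiniteDimensional ℂ W]
    [AddCommGroup T] [Module ℂ T] (Q : T →ₗ[ℂ] W →ₗ[ℂ] W →ₗ[ℂ] ℂ)
    (hs : ∀ τ p q, Q τ p q = Q τ q p)
    (hkey : ∀ p q, p ≠ 0 → q ≠ 0 → ∃ τ, Q τ p q ≠ 0)
    (hdim : Module.finrank ℂ W ≤ 2) (B : W →ₗ[ℂ] W →ₗ[ℂ] ℂ) (hB : ∀ α β, B α β = B β α) :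
    ∃ τ, ∀ α β, B α β = Q τ α β := by
  have hc : Module.finrank ℂ W = 0 ∨ Module.finrank ℂ W = 1 ∨ Module.finrank ℂ W = 2 := by omega
  rcases hc with h | h | h
  · have := Module.finrank_zero_iff.mp h
    refine ⟨0, fun α β => ?_⟩
    rw [Subsingleton.elim α 0]; simp
  · obtain ⟨v, hv, hv'⟩ := finrank_eq_one_iff'.mp h
    obtain ⟨τ, hτ⟩ := hkey v v hv hv
    refine ⟨(B v v / Q τ v v) • τ, fun α β => ?_⟩
    obtain ⟨c, rfl⟩ := hv' α
    obtain ⟨d, rfl⟩ := hv' β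
    simp only [map_smul, LinearMap.smul_apply, smul_eq_mul]
    field_simp
  · let b := Module.finBasisOfFinrankEq ℂ W h
    let L : T →ₗ[ℂ] (Fin 3 → ℂ) := LinearMap.pi
      ![(Q.flip (b 0)).flip (b 0), (Q.flip (b 0)).flip (b 1), (Q.flip (b 1)).flip (b 1)]
    have hL0 : ∀ τ, L τ 0 = Q τ (b 0) (b 0) := fun τ => rfl
    have hL1 : ∀ τ, L τ 1 = Q τ (b 0) (b 1) := fun τ => rfl
    have hL2 : ∀ τ, L τ 2 = Q τ (b 1) (b 1) := fun τ => rfl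
    have hsurj : LinearMap.range L = ⊤ := by
      by_contra hne
      obtain ⟨f, hf, hle⟩ := Submodule.exists_le_ker_of_lt_top _ (lt_top_iff_ne_top.mpr hne)
      have hfe : ∀ y, f y = y 0 * f (Pi.single 0 1) + y 1 * f (Pi.single 1 1)
          + y 2 * f (Pi.single 2 1) := by
        intro y
        have hy : y = y 0 • (Pi.single 0 1 : Fin 3 → ℂ) + y 1 • (Pi.single 1 1 : Fin 3 → ℂ)
            + y 2 • (Pi.single 2 1 : Fin 3 → ℂ) := by
          ext j; fin_cases j <;> simp
        conv_lhs => rw [hy]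
        simp only [map_add, map_smul, smul_eq_mul]
      have hz : ∀ τ, Q τ (b 0) (b 0) * f (Pi.single 0 1) + Q τ (b 0) (b 1) * f (Pi.single 1 1)
          + Q τ (b 1) (b 1) * f (Pi.single 2 1) = 0 := by
        intro τ
        have : f (L τ) = 0 := hle ⟨τ, rfl⟩
        rw [hfe] at this
        exact this
      have hnz : ¬ (f (Pi.single 0 1) = 0 ∧ f (Pi.single 1 1) = 0 ∧ f (Pi.single 2 1) = 0) := by
        rintro ⟨h0, h1, h2⟩
        apply hf
        refine LinearMap.ext fun y => ?_
        rw [hfe]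
        simp [h0, h1, h2]
      obtain ⟨m, n, m', n', hr, hs', ht, h1, h2⟩ := p_factor _ _ _ hnz
      have hne : ∀ m n : ℂ, ¬ (m = 0 ∧ n = 0) → m • b 0 + n • b 1 ≠ 0 := by
        intro m n hmn h0
        apply hmn
        constructor
        · simpa using congrArg (fun x => b.repr x 0) h0
        · simpa using congrArg (fun x => b.repr x 1) h0
      obtain ⟨τ, hτ⟩ := hkey _ _ (hne m n h1) (hne m' n' h2)
      apply hτ
      have := hz τ
      rw [hr, hs', ht] at this
      simp only [map_add, map_smul, LinearMap.add_apply, LinearMap.smul_apply, smul_eq_mul]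
      rw [hs τ (b 1) (b 0)]
      linear_combination this
    obtain ⟨τ, hτ⟩ := LinearMap.range_eq_top.mp hsurj ![B (b 0) (b 0), B (b 0) (b 1), B (b 1) (b 1)]
    refine ⟨τ, fun α β => ?_⟩
    have h0 : Q τ (b 0) (b 0) = B (b 0) (b 0) := by rw [← hL0, hτ]; rfl
    have h1 : Q τ (b 0) (b 1) = B (b 0) (b 1) := by rw [← hL1, hτ]; rfl
    have h2 : Q τ (b 1) (b 1) = B (b 1) (b 1) := by rw [← hL2, hτ]; rfl
    have : B = Q τ := by
      apply b.ext
      intro i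
      apply b.ext
      intro j
      fin_cases i <;> fin_cases j
      · exact h0.symm
      · exact h1.symm
      · change B (b 1) (b 0) = Q τ (b 1) (b 0)
        rw [hB, hs, h1]
      · exact h2.symm
    rw [this]

lemma p_basis (V : Type*) [AddCommGroup V] [Module ℂ V]
    (v₀ : V) (hv₀ : v₀ ≠ 0) (V₀ : Submodule ℂ V) (hcompl : IsCompl (ℂ ∙ v₀) V₀)
    (b : Module.Basis (Fin 5) ℂ V₀) :
    ∃ e : Module.Basis (Fin 6) ℂ V, e 0 = v₀ ∧ ∀ i : Fin 5, e i.succ = b i := by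
  refine ⟨Module.Basis.mkFinCons v₀ b ?_ ?_, ?_, ?_⟩
  · intro c x hx h
    have h1 : c • v₀ ∈ V₀ := by
      rw [eq_neg_of_add_eq_zero_left h]; exact V₀.neg_mem hx
    have := (Submodule.disjoint_def.mp hcompl.disjoint) (c • v₀)
      (Submodule.smul_mem _ _ (Submodule.mem_span_singleton_self _)) h1
    simpa [hv₀] using this
  · intro z
    have hz : z ∈ (ℂ ∙ v₀) ⊔ V₀ := by rw [hcompl.sup_eq_top]; trivial
    obtain ⟨y, hy, w, hw, rfl⟩ := Submodule.mem_sup.mp hz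
    obtain ⟨c, rfl⟩ := Submodule.mem_span_singleton.mp hy
    refine ⟨-c, ?_⟩
    convert hw using 1
    module
  · simp [Module.Basis.coe_mkFinCons]
  · simp [Module.Basis.coe_mkFinCons]

lemma p_vol (V : Type*) [AddCommGroup V] [Module ℂ V]
    (vol : ExteriorAlgebra ℂ V →ₗ[ℂ] ℂ)
    (hvol : Function.Bijective fun x : ⋀[ℂ]^6 V => vol x) (e : Module.Basis (Fin 6) ℂ V) :
    vol (ι ℂ (e 0) * (ι ℂ (e 1) * (ι ℂ (e 2) * (ι ℂ (e 3) * (ι ℂ (e 4) * ι ℂ (e 5)))))) ≠ 0 := by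
  intro h
  have h1 : (vol.compAlternatingMap (ιMulti ℂ 6)) e = 0 := by
    rw [LinearMap.compAlternatingMap_apply, ιMulti_apply]
    simpa [List.ofFn_succ] using h
  rw [AlternatingMap.map_basis_eq_zero_iff] at h1
  obtain ⟨x, hx⟩ := hvol.2 1
  have hle : ⋀[ℂ]^6 V ≤ LinearMap.ker vol := by
    rw [← ιMulti_span_fixedDegree, Submodule.span_le]
    rintro _ ⟨v, rfl⟩
    exact congrArg (fun f => f v) h1
  have : vol x = 0 := hle x.2
  simp [this] at hx

lemma p_range {V : Type*} [AddCommGroup V] [Module ℂ V] (V₀ : Submodule ℂ V)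
    (b : Module.Basis (Fin 5) ℂ V₀) (x : ExteriorAlgebra ℂ V) (hx : x ∈ extSub V₀ 2)
    (h0 : ∀ i, ι ℂ (b i : V) * ι ℂ (b i : V) = 0)
    (h1 : ∀ i j, j < i → ι ℂ (b i : V) * ι ℂ (b j : V) = - (ι ℂ (b j : V) * ι ℂ (b i : V))) :
    ∃ a, x = pPhi (fun i => ι ℂ (b i : V)) a := by
  unfold extSub at hx
  rw [← ιMulti_span_fixedDegree, Submodule.map_span] at hx
  induction hx using Submodule.span_induction with
  | mem x hx =>
    obtain ⟨_, ⟨v, rfl⟩, rfl⟩ := hx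
    refine ⟨pW (b.repr (v 0)) (b.repr (v 1)), ?_⟩
    rw [← pPhi_pW _ h0 h1]
    have hv : ∀ w : V₀, ∑ i, b.repr w i • ι ℂ (b i : V) = ι ℂ (w : V) := by
      intro w
      conv_rhs => rw [← b.sum_repr w]
      simp only [Submodule.coe_sum, Submodule.coe_smul, map_sum, map_smul]
    rw [hv, hv, ιMulti_apply]
    simp [List.ofFn_succ]
  | zero => exact ⟨0, by simp [pPhi]⟩
  | add x y _ _ hx hy =>
    obtain ⟨a, rfl⟩ := hx
    obtain ⟨c, rfl⟩ := hy
    exact ⟨a + c, (pPhi_add _ _ _).symm⟩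
  | smul c x _ hx =>
    obtain ⟨a, rfl⟩ := hx
    exact ⟨c • a, (pPhi_smul _ _ _).symm⟩

lemma p_quad (a b : Fin 10 → ℂ) (d : ℂ) (h : pAll a b = 0) :
    pAll (d • a + b) (d • a + b) = d ^ 2 • pAll a a + pAll b b := by
  have : pAll (d • a + b) (d • a + b) = d ^ 2 • pAll a a + pAll b b + (2 * d) • pAll a b := by
    ext i
    fin_cases i <;> simp [pAll, pP1, pP2, pP3, pP4, pP5] <;> ring
  rw [this, h]; simp

lemma p_iso (a b : Fin 10 → ℂ) (h : pAll a b = 0) (ha : pAll a a ≠ 0) :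
    ∃ d : ℂ, pAll (d • a + b) (d • a + b) = 0 := by
  obtain ⟨i, hi⟩ := Function.ne_iff.mp ha
  simp only [Pi.zero_apply] at hi
  obtain ⟨d, hd⟩ := IsAlgClosed.exists_pow_nat_eq (-(pAll b b i / pAll a a i)) (n := 2) (by norm_num)
  refine ⟨d, ?_⟩
  rw [p_quad _ _ _ h, hd]
  ext j
  have := p_par a b h i j
  simp
  field_simp
  linear_combination this

lemma pAll_symm (a b : Fin 10 → ℂ) : pAll a b = pAll b a := by
  ext i
  fin_cases i <;> simp [pAll, pP1, pP2, pP3, pP4, pP5] <;> ring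

/-- Let `v₀ ≠ 0`, let `V₀` be a 5-dimensional complement of `ℂv₀` and
`W ⊆ ⋀²V₀` a subspace of dimension ≤ 2. The linear map sending `τ ∈ V₀` to the
symmetric bilinear form `b_τ(α,β) = vol(v₀∧τ∧α∧β)` on `W` is surjective onto the
space of symmetric bilinear forms on `W` if and only if `W` contains no nonzero
decomposable element `u∧u'` with `u, u' ∈ V₀`. -/
theorem stmt6 (V : Type*) [AddCommGroup V] [Module ℂ V] [FiniteDimensional ℂ V]
    (hV : Module.finrank ℂ V = 6)
    (vol : ExteriorAlgebra ℂ V →ₗ[ℂ] ℂ)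
    (hvol : Function.Bijective fun x : ⋀[ℂ]^6 V => vol x)
    (v₀ : V) (hv₀ : v₀ ≠ 0)
    (V₀ : Submodule ℂ V) (hV₀ : Module.finrank ℂ V₀ = 5)
    (hcompl : IsCompl (ℂ ∙ v₀) V₀)
    (W : Submodule ℂ (ExteriorAlgebra ℂ V)) (hW : W ≤ extSub V₀ 2)
    (hdim : Module.finrank ℂ W ≤ 2) :
    (∀ B : ↥W →ₗ[ℂ] ↥W →ₗ[ℂ] ℂ, (∀ α β, B α β = B β α) →
      ∃ τ ∈ V₀, ∀ α β : ↥W,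
        B α β = vol (ι ℂ v₀ * (ι ℂ τ *
          ((α : ExteriorAlgebra ℂ V) * (β : ExteriorAlgebra ℂ V))))) ↔
    (∀ x ∈ W, (∃ u ∈ V₀, ∃ u' ∈ V₀, x = ι ℂ u * ι ℂ u') → x = 0) := by
  have hanti : ∀ u v : V, ι ℂ u * ι ℂ v = - (ι ℂ v * ι ℂ u) := fun u v =>
    eq_neg_of_add_eq_zero_left (by
      have h := ι_sq_zero (R := ℂ) (u + v)
      rw [map_add, add_mul, mul_add, mul_add, ι_sq_zero, ι_sq_zero] at h
      simpa using h)
  constructor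
  · rintro H x hx ⟨u, hu, u', hu', hxu⟩
    by_contra hne
    have hne' : (⟨x, hx⟩ : W) ≠ 0 := by simpa [Subtype.ext_iff] using hne
    obtain ⟨f, hf⟩ := Module.Projective.exists_dual_eq_one ℂ hne'
    obtain ⟨τ, -, hτ⟩ := H (LinearMap.smulRight f f) (fun α β => by simp [mul_comm])
    have h1 := hτ ⟨x, hx⟩ ⟨x, hx⟩
    have hxx : x * x = 0 := by
      rw [hxu, mul_assoc, ← mul_assoc (ι ℂ u'), hanti u' u, neg_mul, mul_assoc, ι_sq_zero]
      simp
    simp [hf, hxx] at h1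
  · intro H B hB
    have b := Module.finBasisOfFinrankEq ℂ V₀ hV₀
    obtain ⟨e, he0, hes⟩ := p_basis V v₀ hv₀ V₀ hcompl b
    have hc := p_vol V vol hvol e
    set c := vol (ι ℂ (e 0) * (ι ℂ (e 1) * (ι ℂ (e 2) * (ι ℂ (e 3) * (ι ℂ (e 4) * ι ℂ (e 5))))))
      with hcdef
    have h0 : ∀ i, ι ℂ (b i : V) * ι ℂ (b i : V) = 0 := fun i => ι_sq_zero _
    have h1 : ∀ i j, j < i → ι ℂ (b i : V) * ι ℂ (b j : V) = - (ι ℂ (b j : V) * ι ℂ (b i : V)) :=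
      fun i j _ => hanti _ _
    have hv : ∀ w : V₀, ι ℂ (w : V) = ∑ i, b.repr w i • ι ℂ (b i : V) := by
      intro w
      conv_lhs => rw [← b.sum_repr w]
      simp only [Submodule.coe_sum, Submodule.coe_smul, map_sum, map_smul]
    have hsum : ∀ t : Fin 5 → ℂ, ∑ i, t i • ι ℂ (b i : V) = ι ℂ ((∑ i, t i • b i : V₀) : V) := by
      intro t; simp
    have hform : ∀ (τ : V₀) x y, vol (ι ℂ v₀ * (ι ℂ (τ : V) *
        (pPhi (fun i => ι ℂ (b i : V)) x * pPhi (fun i => ι ℂ (b i : V)) y)))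
        = c * ∑ i, b.repr τ i * pAll x y i := by
      intro τ x y
      rw [hv τ, pTau_mul _ h0 h1, mul_smul_comm, map_smul, hcdef, ← he0, ← hes 0, ← hes 1, ← hes 2,
        ← hes 3, ← hes 4, smul_eq_mul, mul_comm]
      congr 1
      simp [Fin.sum_univ_five, pAll]
      ring
    have hrange : ∀ x ∈ W, ∃ a, x = pPhi (fun i => ι ℂ (b i : V)) a := fun x hx =>
      p_range V₀ b x (hW hx) h0 h1
    have hdec : ∀ a, pPhi (fun i => ι ℂ (b i : V)) a ∈ W → pAll a a = 0 →
        pPhi (fun i => ι ℂ (b i : V)) a = 0 := by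
      intro a haW ha
      obtain ⟨u, v, rfl⟩ := p_decomp a ha
      refine H _ haW ⟨_, (∑ i, u i • b i : V₀).2, _, (∑ i, v i • b i : V₀).2, ?_⟩
      rw [← hsum, ← hsum, pPhi_pW _ h0 h1]
    have hfin : FiniteDimensional ℂ W := by
      let P : (Fin 10 → ℂ) →ₗ[ℂ] ExteriorAlgebra ℂ V :=
        { toFun := pPhi (fun i => ι ℂ (b i : V))
          map_add' := pPhi_add _
          map_smul' := pPhi_smul _ }
      have hle : W ≤ LinearMap.range P := by
        intro x hx
        obtain ⟨a, rfl⟩ := hrange x hx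
        exact ⟨a, rfl⟩
      exact Submodule.finiteDimensional_of_le hle
    let Q : V₀ →ₗ[ℂ] W →ₗ[ℂ] W →ₗ[ℂ] ℂ :=
      LinearMap.mk₂ ℂ (fun τ α => (vol ∘ₗ LinearMap.mulLeft ℂ (ι ℂ v₀) ∘ₗ
          LinearMap.mulLeft ℂ (ι ℂ (τ : V)) ∘ₗ LinearMap.mulLeft ℂ (α : ExteriorAlgebra ℂ V) ∘ₗ
          W.subtype))
        (fun x y z => by ext w; simp [add_mul, mul_add])
        (fun x y z => by ext w; simp)
        (fun x y z => by ext w; simp [add_mul, mul_add])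
        (fun x y z => by ext w; simp)
    have hQ : ∀ τ α β, Q τ α β = vol (ι ℂ v₀ * (ι ℂ (τ : V) *
          ((α : ExteriorAlgebra ℂ V) * (β : ExteriorAlgebra ℂ V)))) := fun τ α β => rfl
    suffices hh : (∀ τ p q, Q τ p q = Q τ q p) ∧ ∀ p q, p ≠ 0 → q ≠ 0 → ∃ τ, Q τ p q ≠ 0 by
      obtain ⟨τ, hτ⟩ := p_abstract Q hh.1 hh.2 hdim B hB
      exact ⟨τ, τ.2, hτ⟩
    constructor
    · rintro τ ⟨p, hp⟩ ⟨q, hq⟩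
      obtain ⟨x, rfl⟩ := hrange p hp
      obtain ⟨y, rfl⟩ := hrange q hq
      rw [hQ, hQ]
      simp only [hform, pAll_symm x y]
    · rintro ⟨p, hp⟩ ⟨q, hq⟩ hp0 hq0
      obtain ⟨x, rfl⟩ := hrange p hp
      obtain ⟨y, rfl⟩ := hrange q hq
      rw [Ne, Submodule.mk_eq_zero] at hp0 hq0
      by_contra! hall
      have hz : ∀ x y, (∀ τ : V₀, vol (ι ℂ v₀ * (ι ℂ (τ : V) *
        (pPhi (fun i => ι ℂ (b i : V)) x * pPhi (fun i => ι ℂ (b i : V)) y))) = 0) → pAll x y = 0 := by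
        intro x y h
        ext i
        have := h (b i)
        rw [hform] at this
        simpa [hc, Finsupp.single_apply] using this
      have hxy := hz x y hall
      have hxx : pAll x x ≠ 0 := fun h => hp0 (hdec x hp h)
      obtain ⟨d, hd⟩ := p_iso x y hxy hxx
      have h2 := hdec (d • x + y) (by
        rw [pPhi_add, pPhi_smul]
        exact W.add_mem (W.smul_mem _ hp) hq) hd
      rw [pPhi_add, pPhi_smul] at h2
      have h3 := eq_neg_of_add_eq_zero_right h2
      by_cases hd0 : d = 0
      · rw [hd0] at h3
        exact hq0 (by simpa using h3)
      · apply hxx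
        apply hz
        intro τ
        have := hall τ
        rw [hQ] at this
        simp only [h3] at this
        simpa [hd0] using this
end

section
/- Let V₀ be a 5-dimensional vector space over ℂ and let W ⊆ ⋀²V₀ be a 2-dimensional subspace containing no nonzero decomposable element (i.e. no nonzero element of the form u∧u' with u, u' ∈ V₀). Then α∧α ≠ 0 in ⋀⁴V₀ for every nonzero α ∈ W, and for any nonzero α, β ∈ W, if α∧α and β∧β are linearly dependent in ⋀⁴V₀ then α and β are linearly dependent; in other words, the map ℙ(W) → ℙ(⋀⁴V₀), [α] ↦ [α∧α], is well defined and injective. -/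
open ExteriorAlgebra

section Helpers

variable {V : Type*} [AddCommGroup V] [Module ℂ V]

/-- contraction on the exterior algebra -/
noncomputable def ctr (d : Module.Dual ℂ V) : ExteriorAlgebra ℂ V →ₗ[ℂ] ExteriorAlgebra ℂ V :=
  CliffordAlgebra.contractLeft (Q := (0 : QuadraticForm ℂ V)) d

theorem ctr_mul (d : Module.Dual ℂ V) (a : V) (y : ExteriorAlgebra ℂ V) :
    ctr d (ι ℂ a * y) = d a • y - ι ℂ a * ctr d y :=
  CliffordAlgebra.contractLeft_ι_mul (Q := (0 : QuadraticForm ℂ V)) d a y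

theorem ctr_ι (d : Module.Dual ℂ V) (a : V) :
    ctr d (ι ℂ a) = algebraMap ℂ _ (d a) :=
  CliffordAlgebra.contractLeft_ι (Q := (0 : QuadraticForm ℂ V)) d a

theorem ctr_comm (d d' : Module.Dual ℂ V) (y : ExteriorAlgebra ℂ V) :
    ctr d (ctr d' y) = - ctr d' (ctr d y) :=
  CliffordAlgebra.contractLeft_comm (Q := (0 : QuadraticForm ℂ V)) d d' y

theorem ctr_pair (d : Module.Dual ℂ V) (a b : V) :
    ctr d (ι ℂ a * ι ℂ b) = ι ℂ (d a • b - d b • a) := by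
  rw [ctr_mul, ctr_ι, ← Algebra.commutes, ← Algebra.smul_def]
  simp

theorem two_ind {P : ExteriorAlgebra ℂ V → Prop}
    (h1 : ∀ a b : V, P (ι ℂ a * ι ℂ b)) (h2 : ∀ x y, P x → P y → P (x + y))
    {x : ExteriorAlgebra ℂ V} (hx : x ∈ ⋀[ℂ]^2 V) : P x := by
  have hx : x ∈ LinearMap.range (ι ℂ (M := V)) * LinearMap.range (ι ℂ (M := V)) := by
    rw [← pow_two]; exact hx
  refine Submodule.mul_induction_on hx ?_ h2
  rintro _ ⟨a, rfl⟩ _ ⟨b, rfl⟩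
  exact h1 a b

theorem ι_anti (a b : V) : ι ℂ a * ι ℂ b = - (ι ℂ b * ι ℂ a) :=
  eq_neg_of_add_eq_zero_left (ι_add_mul_swap a b)

theorem ctr_mem (d : Module.Dual ℂ V) {x : ExteriorAlgebra ℂ V} (hx : x ∈ ⋀[ℂ]^2 V) :
    ∃ v, ctr d x = ι ℂ v := by
  refine two_ind (P := fun x => ∃ v, ctr d x = ι ℂ v) ?_ ?_ hx
  · intro a b; exact ⟨_, ctr_pair d a b⟩
  · rintro x y ⟨v, hv⟩ ⟨w, hw⟩
    exact ⟨v + w, by simp [hv, hw]⟩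

theorem comm_ι {x : ExteriorAlgebra ℂ V} (hx : x ∈ ⋀[ℂ]^2 V) (c : V) :
    x * ι ℂ c = ι ℂ c * x := by
  refine two_ind (P := fun x => x * ι ℂ c = ι ℂ c * x) ?_ ?_ hx
  · intro a b
    rw [mul_assoc, ι_anti b c, mul_neg, ← mul_assoc, ι_anti a c, neg_mul, neg_neg, mul_assoc]
  · intro x y h h'
    rw [add_mul, mul_add, h, h']

theorem comm_two {x y : ExteriorAlgebra ℂ V} (hx : x ∈ ⋀[ℂ]^2 V) (hy : y ∈ ⋀[ℂ]^2 V) :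
    x * y = y * x := by
  refine two_ind (P := fun y => x * y = y * x) ?_ ?_ hy
  · intro a b
    rw [← mul_assoc, comm_ι hx, mul_assoc, comm_ι hx, mul_assoc]
  · intro y z h h'
    rw [add_mul, mul_add, h, h']

theorem ctr_two_mul (d : Module.Dual ℂ V) {x : ExteriorAlgebra ℂ V} (hx : x ∈ ⋀[ℂ]^2 V)
    (y : ExteriorAlgebra ℂ V) : ctr d (x * y) = ctr d x * y + x * ctr d y := by
  refine two_ind (P := fun x => ctr d (x * y) = ctr d x * y + x * ctr d y) ?_ ?_ hx
  · intro a b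
    rw [ctr_pair, mul_assoc, ctr_mul, ctr_mul]
    simp only [map_sub, map_smul, sub_mul, mul_sub, smul_mul_assoc, mul_smul_comm, mul_assoc]
    abel
  · intro x z h h'
    rw [add_mul, map_add, h, h', map_add, add_mul, add_mul]
    abel

theorem euler {n : ℕ} (b : Module.Basis (Fin n) ℂ V) {x : ExteriorAlgebra ℂ V}
    (hx : x ∈ ⋀[ℂ]^2 V) : ∑ i, ι ℂ (b i) * ctr (b.coord i) x = (2 : ℂ) • x := by
  refine two_ind (P := fun x => ∑ i, ι ℂ (b i) * ctr (b.coord i) x = (2 : ℂ) • x) ?_ ?_ hx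
  · intro u v
    have h : ∀ w : V, ∑ i, b.coord i w • ι ℂ (b i) = ι ℂ w := by
      intro w
      conv_rhs => rw [← b.sum_repr w, map_sum]
      simp only [map_smul, Module.Basis.coord_apply]
    simp only [ctr_pair, map_sub, map_smul, mul_sub, mul_smul_comm, Finset.sum_sub_distrib]
    simp only [← smul_mul_assoc, ← Finset.sum_mul, h]
    rw [ι_anti v u, sub_neg_eq_add, two_smul, add_mul]
  · intro x y h h'
    simp only [map_add, mul_add, Finset.sum_add_distrib, h, h', smul_add]

theorem exists_dual [FiniteDimensional ℂ V] {v : V} (hv : v ≠ 0) :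
    ∃ d : Module.Dual ℂ V, d v = 1 := by
  obtain ⟨f, hf⟩ : ∃ f : Module.Dual ℂ V, f v ≠ 0 := by
    by_contra! h
    exact hv ((Module.forall_dual_apply_eq_zero_iff ℂ v).mp h)
  exact ⟨(f v)⁻¹ • f, by simp [hf]⟩

theorem exists_ctr_ne [FiniteDimensional ℂ V] {x : ExteriorAlgebra ℂ V}
    (hx : x ∈ ⋀[ℂ]^2 V) (h0 : x ≠ 0) : ∃ d, ctr d x ≠ 0 := by
  by_contra! h
  have := euler (Module.finBasis ℂ V) hx
  simp only [h, mul_zero, Finset.sum_const_zero] at this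
  exact h0 (by simpa using this.symm)

theorem dec_of_ι_mul [FiniteDimensional ℂ V] {x : ExteriorAlgebra ℂ V}
    (hx : x ∈ ⋀[ℂ]^2 V) {v : V} (hv : v ≠ 0) (h : ι ℂ v * x = 0) :
    ∃ w, x = ι ℂ v * ι ℂ w := by
  obtain ⟨d, hd⟩ := exists_dual hv
  obtain ⟨w, hw⟩ := ctr_mem d hx
  have := congrArg (ctr d) h
  rw [ctr_mul, hd, hw, one_smul, map_zero] at this
  exact ⟨w, sub_eq_zero.mp this⟩

theorem dec_of_sq [FiniteDimensional ℂ V] {x : ExteriorAlgebra ℂ V}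
    (hx : x ∈ ⋀[ℂ]^2 V) (h : x * x = 0) : ∃ u v, x = ι ℂ u * ι ℂ v := by
  by_cases h0 : x = 0
  · exact ⟨0, 0, by simp [h0]⟩
  obtain ⟨d, hd⟩ := exists_ctr_ne hx h0
  obtain ⟨v, hv⟩ := ctr_mem d hx
  have hv0 : v ≠ 0 := by rintro rfl; simp [hv] at hd
  have := congrArg (ctr d) h
  rw [ctr_two_mul d hx, hv, comm_ι hx, map_zero, ← two_smul ℂ] at this
  exact ⟨v, dec_of_ι_mul hx hv0 (by simpa using this)⟩

theorem sq_dec (u v : V) : (ι ℂ u * ι ℂ v) * (ι ℂ u * ι ℂ v) = 0 := by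
  rw [mul_assoc, ← mul_assoc (ι ℂ v), ι_anti v u, neg_mul, mul_neg, mul_assoc, ι_sq_zero]
  simp

theorem exists_ker [FiniteDimensional ℂ V] (h5 : Module.finrank ℂ V = 5)
    {x : ExteriorAlgebra ℂ V} (hx : x ∈ ⋀[ℂ]^2 V) :
    ∃ d : Module.Dual ℂ V, d ≠ 0 ∧ ctr d x = 0 := by
  let b := Module.finBasisOfFinrankEq ℂ V h5
  choose m hm using fun i => ctr_mem (b.coord i) hx
  let A : Matrix (Fin 5) (Fin 5) ℂ := fun i j => b.coord i (m j)
  have hA : A.transpose = -A := by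
    ext i j
    have h := ctr_comm (b.coord j) (b.coord i) x
    rw [hm, hm, ctr_ι, ctr_ι, ← map_neg] at h
    exact (algebraMap_leftInverse V).injective h
  have hdet : A.det = 0 := by
    have h := congrArg Matrix.det hA
    rw [Matrix.det_transpose, Matrix.det_neg] at h
    norm_num at h
    exact self_eq_neg.mp h
  obtain ⟨c, hc, hc'⟩ := Matrix.exists_mulVec_eq_zero_iff.mpr hdet
  have hsum : ∑ j, c j • m j = 0 := by
    refine b.ext_elem fun i => ?_
    have := congrFun hc' i
    simp only [Matrix.mulVec, dotProduct, A] at this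
    simpa [mul_comm] using this
  refine ⟨∑ j, c j • b.coord j, ?_, ?_⟩
  · intro h
    apply hc
    ext j
    have := LinearMap.congr_fun h (b j)
    simpa [Finsupp.single_apply] using this
  · have : ctr (∑ j, c j • b.coord j) x = ∑ j, c j • ctr (b.coord j) x := by
      simp [ctr, map_sum, LinearMap.sum_apply]
    rw [this]
    simp only [hm, ← map_smul, ← map_sum, hsum, map_zero]

theorem sq_prop [FiniteDimensional ℂ V] (h5 : Module.finrank ℂ V = 5)
    {x y : ExteriorAlgebra ℂ V} (hx : x ∈ ⋀[ℂ]^2 V) (hy : y ∈ ⋀[ℂ]^2 V)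
    (hxx : x * x ≠ 0) (hxy : x * y = 0) : ∃ c : ℂ, y * y = c • (x * x) := by
  obtain ⟨d, hd, hdx⟩ := exists_ker h5 hx
  obtain ⟨n, hn⟩ := ctr_mem d hy
  have hn0 : n = 0 := by
    by_contra h0
    have := congrArg (ctr d) hxy
    rw [ctr_two_mul d hx, hdx, zero_mul, zero_add, hn, comm_ι hx, map_zero] at this
    obtain ⟨w, hw⟩ := dec_of_ι_mul hx h0 this
    exact hxx (by rw [hw]; exact sq_dec _ _)
  have hdy : ctr d y = 0 := by rw [hn, hn0, map_zero]
  obtain ⟨e, he⟩ : ∃ e, d e = 1 := by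
    obtain ⟨e, he⟩ : ∃ e, d e ≠ 0 := by
      by_contra! h
      exact hd (LinearMap.ext h)
    exact ⟨(d e)⁻¹ • e, by simp [he]⟩
  have key : ∀ z ∈ ⋀[ℂ]^2 V, ctr d z = 0 →
      ctr d (ι ℂ e * (z * z)) = z * z ∧ ι ℂ e * (z * z) ∈ ⋀[ℂ]^5 V := by
    intro z hz hdz
    constructor
    · rw [ctr_mul, he, ctr_two_mul d hz, hdz]; simp
    · have h4 := Submodule.mul_mem_mul hz hz
      have := Submodule.mul_mem_mul (LinearMap.mem_range_self (ι ℂ (M := V)) e) h4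
      rw [← pow_add, ← pow_succ'] at this
      exact this
  obtain ⟨kx, kx5⟩ := key x hx hdx
  obtain ⟨ky, ky5⟩ := key y hy hdy
  have hf : Module.finrank ℂ (⋀[ℂ]^5 V) = 1 := by
    rw [exteriorPower.finrank_eq, h5]; rfl
  have hne : (⟨_, kx5⟩ : ⋀[ℂ]^5 V) ≠ 0 := by
    intro h
    have h' : ι ℂ e * (x * x) = 0 := congrArg Subtype.val h
    rw [h', map_zero] at kx
    exact hxx kx.symm
  obtain ⟨c, hc⟩ := (finrank_eq_one_iff_of_nonzero' _ hne).mp hf ⟨_, ky5⟩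
  have hc' : c • (ι ℂ e * (x * x)) = ι ℂ e * (y * y) := congrArg Subtype.val hc
  exact ⟨c, by rw [← ky, ← hc', map_smul, kx]⟩

end Helpers

/-- Let `V₀` be 5-dimensional over `ℂ` and `W ⊆ ⋀²V₀` a 2-dimensional
subspace containing no nonzero decomposable element. Then `α∧α ≠ 0` for every nonzero
`α ∈ W`, and for nonzero `α, β ∈ W`, if `α∧α` and `β∧β` are linearly dependent then so
are `α` and `β`; i.e. `ℙ(W) → ℙ(⋀⁴V₀)`, `[α] ↦ [α∧α]` is well defined and injective. -/
theorem stmt7 (V₀ : Type*) [AddCommGroup V₀] [Module ℂ V₀] [FiniteDimensional ℂ V₀]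
    (hV₀ : Module.finrank ℂ V₀ = 5)
    (W : Submodule ℂ (ExteriorAlgebra ℂ V₀)) (hW : W ≤ ⋀[ℂ]^2 V₀)
    (hdim : Module.finrank ℂ W = 2)
    (hdec : ∀ x ∈ W, (∃ u u' : V₀, x = ι ℂ u * ι ℂ u') → x = 0) :
    (∀ α ∈ W, α ≠ 0 → α * α ≠ 0) ∧
    (∀ α ∈ W, ∀ β ∈ W, α ≠ 0 → β ≠ 0 →
      ∀ c : ℂ, α * α = c • (β * β) → ∃ d : ℂ, α = d • β) := by
  have part1 : ∀ α ∈ W, α ≠ 0 → α * α ≠ 0 := by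
    intro α hα h0 h
    exact h0 (hdec α hα (dec_of_sq (hW hα) h))
  refine ⟨part1, ?_⟩
  intro α hα β hβ _ _ c hc
  obtain ⟨g, rfl⟩ : ∃ g : ℂ, c = g * g := IsAlgClosed.exists_eq_mul_self c
  have hμ : α - g • β ∈ W := W.sub_mem hα (W.smul_mem g hβ)
  have hν : α + g • β ∈ W := W.add_mem hα (W.smul_mem g hβ)
  have hμν : (α - g • β) * (α + g • β) = 0 := by
    simp only [sub_mul, mul_add, smul_mul_assoc, mul_smul_comm, hc,
      comm_two (hW hβ) (hW hα)]
    module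
  by_cases h0 : α - g • β = 0
  · exact ⟨g, sub_eq_zero.mp h0⟩
  generalize hμe : α - g • β = μ at *
  generalize hνe : α + g • β = ν at *
  have hμμ := part1 μ hμ h0
  obtain ⟨k, hk⟩ := sq_prop hV₀ (hW hμ) (hW hν) hμμ hμν
  obtain ⟨s, hs⟩ : ∃ s : ℂ, -k = s * s := IsAlgClosed.exists_eq_mul_self (-k)
  have hνμ : ν * μ = 0 := by rw [comm_two (hW hν) (hW hμ), hμν]
  have hsq : (s • μ + ν) * (s • μ + ν) = 0 := by
    simp only [add_mul, mul_add, smul_mul_assoc, mul_smul_comm, hμν, hνμ, hk,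
      smul_zero]
    have hk' : k = -(s * s) := by rw [← hs, neg_neg]
    rw [hk']
    module
  have hz : s • μ + ν = 0 := by
    by_contra hne
    exact part1 _ (W.add_mem (W.smul_mem s hμ) hν) hne hsq
  have hs0 : s = 0 := by
    have := congrArg (fun z => μ * z) hz
    simp only [mul_add, mul_smul_comm, hμν, add_zero, mul_zero] at this
    exact (smul_eq_zero.mp this).resolve_right hμμ
  have hν0 : ν = 0 := by simpa [hs0] using hz
  refine ⟨-g, ?_⟩
  rw [neg_smul]
  exact eq_neg_of_add_eq_zero_left (hνe.trans hν0)
end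

section
/- Let V₀ be a 5-dimensional vector space over ℂ and let W ⊆ ⋀²V₀ be a 2-dimensional subspace containing no nonzero decomposable element. Then the linear map (⋀⁴V₀)^∨ → {symmetric bilinear forms on W} sending a linear functional φ to the symmetric bilinear form (α,β) ↦ φ(α∧β) on W is surjective; equivalently, every quadratic form on W is of the form α ↦ φ(α∧α) for some φ ∈ (⋀⁴V₀)^∨. -/
open ExteriorAlgebra

set_option linter.unusedSimpArgs false
section
variable {V : Type*} [AddCommGroup V] [Module ℂ V]

/-- Ten-term normal form of a bivector. -/
def ten (e : Fin 5 → V) (q : Fin 5 → Fin 5 → ℂ) : ExteriorAlgebra ℂ V :=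
  q 0 1 • (ι ℂ (e 0) * ι ℂ (e 1)) + q 0 2 • (ι ℂ (e 0) * ι ℂ (e 2)) +
  q 0 3 • (ι ℂ (e 0) * ι ℂ (e 3)) + q 0 4 • (ι ℂ (e 0) * ι ℂ (e 4)) +
  q 1 2 • (ι ℂ (e 1) * ι ℂ (e 2)) + q 1 3 • (ι ℂ (e 1) * ι ℂ (e 3)) +
  q 1 4 • (ι ℂ (e 1) * ι ℂ (e 4)) + q 2 3 • (ι ℂ (e 2) * ι ℂ (e 3)) +
  q 2 4 • (ι ℂ (e 2) * ι ℂ (e 4)) + q 3 4 • (ι ℂ (e 3) * ι ℂ (e 4))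

theorem anti (u v : V) : ι ℂ u * ι ℂ v = - (ι ℂ v * ι ℂ u) :=
  eq_neg_of_add_eq_zero_left (ι_add_mul_swap u v)

theorem anti' (u v : V) (x : ExteriorAlgebra ℂ V) :
    ι ℂ u * (ι ℂ v * x) = - (ι ℂ v * (ι ℂ u * x)) := by
  rw [← mul_assoc, anti, neg_mul, mul_assoc]

theorem sq' (u : V) (x : ExteriorAlgebra ℂ V) : ι ℂ u * (ι ℂ u * x) = 0 := by
  rw [← mul_assoc, ι_sq_zero, zero_mul]

theorem sum_eq_ten (e : Fin 5 → V) (m : Fin 5 → Fin 5 → ℂ) :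
    ∑ i, ∑ j, m i j • (ι ℂ (e i) * ι ℂ (e j)) = ten e (fun i j => m i j - m j i) := by
  simp only [Fin.sum_univ_five, ten, ι_sq_zero, anti (e 1) (e 0), anti (e 2) (e 0),
    anti (e 3) (e 0), anti (e 4) (e 0), anti (e 2) (e 1), anti (e 3) (e 1), anti (e 4) (e 1),
    anti (e 3) (e 2), anti (e 4) (e 2), anti (e 4) (e 3)]
  module

theorem exists_sum (b : Module.Basis (Fin 5) ℂ V) (x : ExteriorAlgebra ℂ V)
    (hx : x ∈ ⋀[ℂ]^2 V) : ∃ m : Fin 5 → Fin 5 → ℂ,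
      x = ∑ i, ∑ j, m i j • (ι ℂ (b i) * ι ℂ (b j)) := by
  rw [exteriorPower, pow_two] at hx
  induction hx using Submodule.mul_induction_on' with
  | mem_mul_mem u hu v hv =>
    obtain ⟨u, rfl⟩ := hu
    obtain ⟨v, rfl⟩ := hv
    refine ⟨fun i j => b.repr u i * b.repr v j, ?_⟩
    conv_lhs => rw [← b.sum_repr u, ← b.sum_repr v]
    simp only [map_sum, map_smul, Finset.sum_mul, Finset.mul_sum, smul_mul_smul_comm]
    rw [Finset.sum_comm]
  | add x _ y _ hx hy =>
    obtain ⟨m, rfl⟩ := hx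
    obtain ⟨n, rfl⟩ := hy
    refine ⟨fun i j => m i j + n i j, ?_⟩
    simp only [add_smul, Finset.sum_add_distrib]

theorem pivot (e : Fin 5 → V) (q : Fin 5 → Fin 5 → ℂ) (h : q 0 1 ≠ 0) :
    ∃ f g : V, ten e q = ι ℂ f * ι ℂ g + (q 2 3 - (q 0 2 * q 1 3 - q 0 3 * q 1 2) / q 0 1) • (ι ℂ (e 2) * ι ℂ (e 3))
      + (q 2 4 - (q 0 2 * q 1 4 - q 0 4 * q 1 2) / q 0 1) • (ι ℂ (e 2) * ι ℂ (e 4))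
      + (q 3 4 - (q 0 3 * q 1 4 - q 0 4 * q 1 3) / q 0 1) • (ι ℂ (e 3) * ι ℂ (e 4)) := by
  refine ⟨e 0 - (q 1 2 / q 0 1) • e 2 - (q 1 3 / q 0 1) • e 3 - (q 1 4 / q 0 1) • e 4,
    q 0 1 • e 1 + q 0 2 • e 2 + q 0 3 • e 3 + q 0 4 • e 4, ?_⟩
  simp only [ten, map_add, map_sub, map_smul, mul_add, add_mul, mul_sub, sub_mul,
    smul_mul_smul_comm, ι_sq_zero, mul_smul_comm, smul_mul_assoc, 
    anti (e 2) (e 1), anti (e 3) (e 1), anti (e 4) (e 1),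
    anti (e 3) (e 2), anti (e 4) (e 2), anti (e 4) (e 3)]
  match_scalars <;> field_simp <;> ring

theorem three (f g k : V) (a b c : ℂ) : ∃ u v : V,
    a • (ι ℂ f * ι ℂ g) + b • (ι ℂ f * ι ℂ k) + c • (ι ℂ g * ι ℂ k) = ι ℂ u * ι ℂ v := by
  by_cases ha : a = 0
  · refine ⟨b • f + c • g, k, ?_⟩
    simp [ha, add_mul]
  · refine ⟨f - (c / a) • k, a • g + b • k, ?_⟩
    simp only [map_add, map_sub, map_smul, mul_add, sub_mul,
      ι_sq_zero, mul_smul_comm, smul_mul_assoc, anti k g]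
    match_scalars <;> field_simp

theorem dep (f g k : V) (a b c : ℂ) : ∃ u v : V,
    ι ℂ f * ι ℂ g + ι ℂ (a • f + b • g + c • k) * ι ℂ k = ι ℂ u * ι ℂ v := by
  obtain ⟨u, v, h⟩ := three f g k 1 a b
  refine ⟨u, v, ?_⟩
  rw [← h]
  simp [add_mul, add_assoc]

theorem normal (b : Module.Basis (Fin 5) ℂ V) (x : ExteriorAlgebra ℂ V)
    (hx : x ∈ ⋀[ℂ]^2 V) : ∃ f g h k : V, x = ι ℂ f * ι ℂ g + ι ℂ h * ι ℂ k := by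
  obtain ⟨m, hm⟩ := exists_sum b x hx
  by_cases H : ∃ i j, i ≠ j ∧ m i j - m j i ≠ 0
  · obtain ⟨i, j, hij, h⟩ := H
    obtain ⟨σ, h0, h1⟩ : ∃ σ : Equiv.Perm (Fin 5), σ 0 = i ∧ σ 1 = j := by
      revert i j; clear * -
      intro i j hij _
      refine ⟨Equiv.swap 0 i * Equiv.swap 1 (Equiv.swap 0 i j), ?_, ?_⟩
      · have h2 : (0 : Fin 5) ≠ Equiv.swap 0 i j := by
          intro h
          apply hij
          have := congrArg (Equiv.swap 0 i) h
          simpa using this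
        rw [Equiv.Perm.mul_apply,
          Equiv.swap_apply_of_ne_of_ne (a := 1) (x := 0) (by simp) h2, Equiv.swap_apply_left]
      · simp
    have : x = ten (b ∘ σ) (fun i j => m (σ i) (σ j) - m (σ j) (σ i)) := by
      rw [← sum_eq_ten (b ∘ σ) (fun i j => m (σ i) (σ j)), hm, ← Equiv.sum_comp σ]
      refine Finset.sum_congr rfl fun i _ => ?_
      rw [← Equiv.sum_comp σ]
      rfl
    obtain ⟨f, g, h2⟩ := pivot (b ∘ σ) (fun i j => m (σ i) (σ j) - m (σ j) (σ i))
      (by simpa [h0, h1] using h)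
    rw [this, h2]
    simp only [add_assoc]
    simp only [← add_assoc (_ • _)]
    obtain ⟨u, v, h3⟩ := three ((b ∘ σ) 2) ((b ∘ σ) 3) ((b ∘ σ) 4) _ _ _
    exact ⟨f, g, u, v, by rw [h3]⟩
  · push Not at H
    refine ⟨0, 0, 0, 0, ?_⟩
    rw [hm, sum_eq_ten]
    simp [ten, H]

theorem top_ne (b : Module.Basis (Fin 5) ℂ V) :
    ι ℂ (b 0) * (ι ℂ (b 1) * (ι ℂ (b 2) * (ι ℂ (b 3) * ι ℂ (b 4)))) ≠ 0 := by
  intro h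
  have h1 : ιMulti ℂ 5 b = 0 := by
    rw [ιMulti_apply]
    simpa [List.ofFn_succ] using h
  have h2 := congrArg (liftAlternating (R := ℂ) (M := V) (N := ℂ)
    (fun i => if h : i = 5 then h ▸ b.det else 0)) h1
  rw [liftAlternating_apply_ιMulti] at h2
  simp [b.det_self] at h2

theorem extend4 [FiniteDimensional ℂ V] (hV : Module.finrank ℂ V = 5) (f g h k : V)
    (hl : LinearIndependent ℂ ![f, g, h, k]) :
    ∃ b : Module.Basis (Fin 5) ℂ V, b 0 = f ∧ b 1 = g ∧ b 2 = h ∧ b 3 = k := by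
  obtain ⟨z, hz⟩ := exists_linearIndependent_snoc_of_lt_finrank hl (by omega)
  refine ⟨basisOfLinearIndependentOfCardEqFinrank hz (by simp [hV]), ?_⟩
  simp only [coe_basisOfLinearIndependentOfCardEqFinrank]
  exact ⟨rfl, rfl, rfl, rfl⟩

theorem dep_decomp (f g h k : V)
    (hl : ¬ LinearIndependent ℂ ![f, g, h, k]) :
    ∃ u v : V, ι ℂ f * ι ℂ g + ι ℂ h * ι ℂ k = ι ℂ u * ι ℂ v := by
  rw [Fintype.not_linearIndependent_iff] at hl
  obtain ⟨c, hc, i, hi⟩ := hl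
  simp [Fin.sum_univ_four] at hc
  fin_cases i
  · have hi : c 0 ≠ 0 := hi
    have : f = (-c 2 / c 0) • h + (-c 3 / c 0) • k + (-c 1 / c 0) • g := by
      rw [← sub_eq_zero, ← smul_right_injective V hi |>.eq_iff, smul_zero, ← hc]
      match_scalars <;> field_simp
    rw [this, add_comm]
    exact dep ..
  · have hi : c 1 ≠ 0 := hi
    have : g = (-c 2 / c 1) • h + (-c 3 / c 1) • k + (c 0 / c 1) • (-f) := by
      rw [← sub_eq_zero, ← smul_right_injective V hi |>.eq_iff, smul_zero, ← hc]
      match_scalars <;> field_simp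
    rw [anti f g, ← mul_neg, ← map_neg, this, add_comm]
    exact dep ..
  · have hi : c 2 ≠ 0 := hi
    have : h = (-c 0 / c 2) • f + (-c 1 / c 2) • g + (-c 3 / c 2) • k := by
      rw [← sub_eq_zero, ← smul_right_injective V hi |>.eq_iff, smul_zero, ← hc]
      match_scalars <;> field_simp
    rw [this]
    exact dep ..
  · have hi : c 3 ≠ 0 := hi
    have : k = (-c 0 / c 3) • f + (-c 1 / c 3) • g + (c 2 / c 3) • (-h) := by
      rw [← sub_eq_zero, ← smul_right_injective V hi |>.eq_iff, smul_zero, ← hc]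
      match_scalars <;> field_simp
    rw [anti h k, ← mul_neg, ← map_neg, this]
    exact dep ..

theorem comm2 (x y : ExteriorAlgebra ℂ V) (hx : x ∈ ⋀[ℂ]^2 V) (hy : y ∈ ⋀[ℂ]^2 V) :
    x * y = y * x := by
  rw [exteriorPower, pow_two] at hx hy
  induction hx using Submodule.mul_induction_on' with
  | mem_mul_mem u hu v hv =>
    obtain ⟨u, rfl⟩ := hu
    obtain ⟨v, rfl⟩ := hv
    induction hy using Submodule.mul_induction_on' with
    | mem_mul_mem s hs t ht =>
      obtain ⟨s, rfl⟩ := hs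
      obtain ⟨t, rfl⟩ := ht
      simp only [mul_assoc]
      rw [anti' v s, anti v t, mul_neg, mul_neg, mul_neg, neg_neg, anti' u s, anti' u t, mul_neg,
        neg_neg]
    | add x _ y _ hx hy => rw [mul_add, add_mul, hx, hy]
  | add x _ y _ hx hy => rw [mul_add, add_mul, hx, hy]

theorem sq_decomp [FiniteDimensional ℂ V] (hV : Module.finrank ℂ V = 5)
    (x : ExteriorAlgebra ℂ V) (hx : x ∈ ⋀[ℂ]^2 V) (h0 : x * x = 0) :
    ∃ u v : V, x = ι ℂ u * ι ℂ v := by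
  obtain ⟨f, g, h, k, rfl⟩ := normal (Module.finBasisOfFinrankEq ℂ V hV) x hx
  by_cases hl : LinearIndependent ℂ ![f, g, h, k]
  · exfalso
    obtain ⟨b, rfl, rfl, rfl, rfl⟩ := extend4 hV f g h k hl
    apply top_ne b
    have h1 : (2:ℂ) • (ι ℂ (b 0) * (ι ℂ (b 1) * (ι ℂ (b 2) * (ι ℂ (b 3) * ι ℂ (b 4)))))
        = (ι ℂ (b 0) * ι ℂ (b 1) + ι ℂ (b 2) * ι ℂ (b 3)) *
          (ι ℂ (b 0) * ι ℂ (b 1) + ι ℂ (b 2) * ι ℂ (b 3)) * ι ℂ (b 4) := by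
      simp only [mul_add, add_mul, mul_assoc, anti' (b 1) (b 0), anti' (b 2) (b 0),
        anti' (b 2) (b 1), anti' (b 3) (b 0), anti' (b 3) (b 1), anti' (b 3) (b 2), sq',
        anti (b 2) (b 0), anti (b 2) (b 1), anti (b 3) (b 0), anti (b 3) (b 1), anti (b 1) (b 0),
        anti (b 3) (b 2), ι_sq_zero,
        mul_neg, neg_mul, mul_zero, zero_mul, neg_zero]
      module
    rw [h0, zero_mul] at h1
    simpa using h1
  · exact dep_decomp f g h k hl

theorem key_sq (b : Module.Basis (Fin 5) ℂ V) (d : ExteriorAlgebra ℂ V) (hd : d ∈ ⋀[ℂ]^2 V)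
    (h0 : (ι ℂ (b 0) * ι ℂ (b 1) + ι ℂ (b 2) * ι ℂ (b 3)) * d = 0) :
    ∃ l : ℂ, d * d = l • ((ι ℂ (b 0) * ι ℂ (b 1) + ι ℂ (b 2) * ι ℂ (b 3)) *
      (ι ℂ (b 0) * ι ℂ (b 1) + ι ℂ (b 2) * ι ℂ (b 3))) := by
  obtain ⟨m, hm⟩ := exists_sum b d hd
  rw [sum_eq_ten] at hm
  generalize (fun i j => m i j - m j i) = q at hm
  subst hm
  have T := top_ne b
  have main : ∀ i, (ι ℂ (b 0) * ι ℂ (b 1) + ι ℂ (b 2) * ι ℂ (b 3)) * ten b q * ι ℂ (b i) = 0 := by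
    intro i; rw [h0, zero_mul]
  have m0 := main 0
  have m1 := main 1
  have m2 := main 2
  have m3 := main 3
  simp only [ten, mul_add, add_mul, mul_assoc, mul_smul_comm, smul_mul_assoc,
    anti (b 1) (b 0), anti (b 2) (b 0),
    anti (b 3) (b 0), anti (b 4) (b 0), anti (b 2) (b 1), anti (b 3) (b 1), anti (b 4) (b 1),
    anti (b 3) (b 2), anti (b 4) (b 2), anti (b 4) (b 3),
    anti' (b 1) (b 0), anti' (b 2) (b 0),
    anti' (b 3) (b 0), anti' (b 4) (b 0), anti' (b 2) (b 1), anti' (b 3) (b 1), anti' (b 4) (b 1),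
    anti' (b 3) (b 2), anti' (b 4) (b 2), anti' (b 4) (b 3), sq', ι_sq_zero,
    mul_neg, neg_mul, mul_zero, smul_zero, neg_zero, add_zero, zero_add, smul_neg, neg_neg,
    neg_eq_zero, smul_eq_zero, T, or_false] at m0 m1 m2 m3
  refine ⟨q 0 1 * q 2 3 - q 0 2 * q 1 3 + q 0 3 * q 1 2, ?_⟩
  simp only [ten, m0, m1, m2, m3, zero_smul, mul_add, add_mul, mul_assoc, mul_smul_comm,
    smul_mul_assoc, anti (b 1) (b 0), anti (b 2) (b 0),
    anti (b 3) (b 0), anti (b 2) (b 1), anti (b 3) (b 1), 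
    anti (b 3) (b 2), 
    anti' (b 1) (b 0), anti' (b 2) (b 0),
    anti' (b 3) (b 0), anti' (b 2) (b 1), anti' (b 3) (b 1), 
    anti' (b 3) (b 2), sq', ι_sq_zero,
    mul_neg, neg_mul, mul_zero, smul_zero, neg_zero, add_zero, zero_add, smul_neg, neg_neg]
  module

theorem key [FiniteDimensional ℂ V] (hV : Module.finrank ℂ V = 5)
    (W : Submodule ℂ (ExteriorAlgebra ℂ V)) (hW : W ≤ ⋀[ℂ]^2 V)
    (hdec : ∀ x ∈ W, (∃ u u' : V, x = ι ℂ u * ι ℂ u') → x = 0)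
    (c d : ExteriorAlgebra ℂ V) (hc : c ∈ W) (hd : d ∈ W) (h0 : c * d = 0) :
    c = 0 ∨ d = 0 := by
  by_contra! H
  have hcc : c * c ≠ 0 := fun h => H.1 (hdec c hc (sq_decomp hV c (hW hc) h))
  obtain ⟨l, hl⟩ : ∃ l : ℂ, d * d = l • (c * c) := by
    obtain ⟨f, g, h, k, rfl⟩ := normal (Module.finBasisOfFinrankEq ℂ V hV) c (hW hc)
    by_cases hl : LinearIndependent ℂ ![f, g, h, k]
    · obtain ⟨b, rfl, rfl, rfl, rfl⟩ := extend4 hV f g h k hl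
      exact key_sq b d (hW hd) h0
    · exact absurd (hdec _ hc (dep_decomp f g h k hl)) H.1
  obtain ⟨t, ht⟩ := IsAlgClosed.exists_eq_mul_self (-l)
  have hmem : d + t • c ∈ W := W.add_mem hd (W.smul_mem t hc)
  have h1 : (d + t • c) * (d + t • c) = 0 := by
    have : d * c = 0 := by rw [comm2 d c (hW hd) (hW hc), h0]
    have hl' : l = -(t * t) := by rw [← ht, neg_neg]
    simp only [mul_add, add_mul, mul_smul_comm, smul_mul_assoc, this, h0, hl, hl']
    module
  have h2 := hdec _ hmem (sq_decomp hV _ (hW hmem) h1)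
  have h3 : c * (d + t • c) = 0 := by rw [h2, mul_zero]
  rw [mul_add, h0, zero_add, mul_smul_comm, smul_eq_zero] at h3
  have h4 := h3.resolve_right hcc
  rw [h4, zero_smul, add_zero] at h2
  exact H.2 h2
end

/-- Let `V₀` be 5-dimensional over `ℂ` and `W ⊆ ⋀²V₀` a 2-dimensional
subspace containing no nonzero decomposable element. Then every symmetric bilinear
form on `W` is of the form `(α,β) ↦ φ(α∧β)` for some linear functional `φ` (on `⋀⁴V₀`,
here given as a functional on the exterior algebra); i.e. the natural map
`(⋀⁴V₀)^∨ → Sym²(W^∨)` is surjective. -/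
theorem stmt8 (V₀ : Type*) [AddCommGroup V₀] [Module ℂ V₀] [FiniteDimensional ℂ V₀]
    (hV₀ : Module.finrank ℂ V₀ = 5)
    (W : Submodule ℂ (ExteriorAlgebra ℂ V₀)) (hW : W ≤ ⋀[ℂ]^2 V₀)
    (hdim : Module.finrank ℂ W = 2)
    (hdec : ∀ x ∈ W, (∃ u u' : V₀, x = ι ℂ u * ι ℂ u') → x = 0) :
    ∀ B : ↥W →ₗ[ℂ] ↥W →ₗ[ℂ] ℂ, (∀ α β, B α β = B β α) →
      ∃ φ : ExteriorAlgebra ℂ V₀ →ₗ[ℂ] ℂ, ∀ α β : ↥W,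
        B α β = φ ((α : ExteriorAlgebra ℂ V₀) * (β : ExteriorAlgebra ℂ V₀)) := by
  intro B hB
  have : FiniteDimensional ℂ W := Module.finite_of_finrank_pos (by omega)
  let w := Module.finBasisOfFinrankEq ℂ W hdim
  have hli : ∀ s t : ℂ, s • (w 0 : ExteriorAlgebra ℂ V₀) + t • (w 1 : ExteriorAlgebra ℂ V₀) = 0 →
      s = 0 ∧ t = 0 := by
    intro s t h
    have := Fintype.linearIndependent_iff.1 w.linearIndependent ![s, t] (by
      apply Subtype.ext
      simpa [Fin.sum_univ_two] using h)
    exact ⟨this 0, this 1⟩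
  have hcomm := comm2 (w 1 : ExteriorAlgebra ℂ V₀) (w 0) (hW (w 1).2) (hW (w 0).2)
  have K := key hV₀ W hW hdec
  have hind : LinearIndependent ℂ ![(w 0 : ExteriorAlgebra ℂ V₀) * w 0, (w 0 : ExteriorAlgebra ℂ V₀) * w 1,
      (w 1 : ExteriorAlgebra ℂ V₀) * w 1] := by
    rw [Fintype.linearIndependent_iff]
    intro g hg
    simp only [Fin.sum_univ_three, Matrix.cons_val_zero, Matrix.cons_val_one,
      Matrix.cons_val] at hg
    have g0 : g 0 = 0 := by
      by_contra hne
      obtain ⟨s, hs⟩ := IsAlgClosed.exists_eq_mul_self (g 1 * g 1 - 4 * g 0 * g 2)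
      have h2 : (2 * g 0) ≠ 0 := by simpa using hne
      have hprod : ((2 * g 0) • (w 0 : ExteriorAlgebra ℂ V₀) + (g 1 - s) • (w 1 : ExteriorAlgebra ℂ V₀)) *
          ((2 * g 0) • (w 0 : ExteriorAlgebra ℂ V₀) + (g 1 + s) • (w 1 : ExteriorAlgebra ℂ V₀)) = 0 := by
        have e : (g 1 - s) * (g 1 + s) = 4 * g 0 * g 2 := by linear_combination hs
        have e' : ((2 * g 0) • (w 0 : ExteriorAlgebra ℂ V₀) + (g 1 - s) • (w 1 : ExteriorAlgebra ℂ V₀)) *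
          ((2 * g 0) • (w 0 : ExteriorAlgebra ℂ V₀) + (g 1 + s) • (w 1 : ExteriorAlgebra ℂ V₀)) =
          (4 * g 0) • (g 0 • ((w 0 : ExteriorAlgebra ℂ V₀) * w 0) +
            g 1 • ((w 0 : ExteriorAlgebra ℂ V₀) * w 1)) +
            ((g 1 - s) * (g 1 + s)) • ((w 1 : ExteriorAlgebra ℂ V₀) * w 1) := by
          simp only [mul_add, add_mul, mul_smul_comm, smul_mul_assoc, hcomm]
          module
        rw [e', e, mul_smul (4 * g 0) (g 2), ← smul_add, hg, smul_zero]
      rcases K _ _ (W.add_mem (W.smul_mem _ (w 0).2) (W.smul_mem _ (w 1).2))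
        (W.add_mem (W.smul_mem _ (w 0).2) (W.smul_mem _ (w 1).2)) hprod with h | h
      · exact h2 (hli _ _ h).1
      · exact h2 (hli _ _ h).1
    have hprod : (w 1 : ExteriorAlgebra ℂ V₀) *
        (g 1 • (w 0 : ExteriorAlgebra ℂ V₀) + g 2 • (w 1 : ExteriorAlgebra ℂ V₀)) = 0 := by
      rw [g0, zero_smul, zero_add] at hg
      rw [mul_add, mul_smul_comm, mul_smul_comm, hcomm, hg]
    have h12 : g 1 = 0 ∧ g 2 = 0 := by
      rcases K _ _ (w 1).2
        (W.add_mem (W.smul_mem _ (w 0).2) (W.smul_mem _ (w 1).2)) hprod with h | h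
      · exact absurd (hli 0 1 (by rw [h, smul_zero, zero_smul, add_zero])).2 one_ne_zero
      · exact hli _ _ h
    intro i
    fin_cases i
    exacts [g0, h12.1, h12.2]
  obtain ⟨φ, hφ⟩ : ∃ φ : ExteriorAlgebra ℂ V₀ →ₗ[ℂ] ℂ, ∀ i, 
    φ (![(w 0 : ExteriorAlgebra ℂ V₀) * w 0, (w 0 : ExteriorAlgebra ℂ V₀) * w 1,
      (w 1 : ExteriorAlgebra ℂ V₀) * w 1] i) = ![B (w 0) (w 0), B (w 0) (w 1), B (w 1) (w 1)] i := by
    obtain ⟨φ, hφ⟩ := LinearMap.exists_extend ((Module.Basis.span hind).constr ℂ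
      ![B (w 0) (w 0), B (w 0) (w 1), B (w 1) (w 1)])
    refine ⟨φ, fun i => ?_⟩
    have h1 := LinearMap.congr_fun hφ (Module.Basis.span hind i)
    rw [Module.Basis.constr_basis, LinearMap.comp_apply, Submodule.subtype_apply,
      Module.Basis.span_apply] at h1
    exact h1
  refine ⟨φ, ?_⟩
  have e0 := hφ 0
  have e1 := hφ 1
  have e2 := hφ 2
  simp at e0 e1 e2
  intro α β
  have hrep : ∀ γ : W, ∃ s t : ℂ, γ = s • w 0 + t • w 1 := fun γ =>
    ⟨w.repr γ 0, w.repr γ 1, by rw [← Fin.sum_univ_two (fun i => w.repr γ i • w i), w.sum_repr]⟩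
  obtain ⟨a, b, rfl⟩ := hrep α
  obtain ⟨c, d, rfl⟩ := hrep β
  simp only [map_add, map_smul, LinearMap.add_apply, LinearMap.smul_apply, smul_eq_mul,
    Submodule.coe_add, Submodule.coe_smul, mul_add, add_mul, mul_smul_comm, smul_mul_assoc,
    hcomm, e0, e1, e2, hB (w 1) (w 0)]
end

section
/- Let V be 6-dimensional over ℂ with vol : ⋀⁶V → ℂ a linear isomorphism, and let σ be the symplectic form on ⋀³V given by σ(α,β) = vol(α∧β). Let ω₀ ∈ ⋀⁶V be the element with vol(ω₀) = 1, and define the bilinear form σ^∨ on ⋀³(V^∨) by σ^∨(ψ,χ) = ⟨ψ∧χ, ω₀⟩, where ⟨·,·⟩ : ⋀⁶(V^∨) × ⋀⁶V → ℂ is the canonical determinant pairing. If A ⊆ ⋀³V is a Lagrangian subspace of (⋀³V, σ), then its annihilator A^⊥ := {ψ ∈ ⋀³(V^∨) : ⟨ψ, a⟩ = 0 for all a ∈ A} (with respect to the canonical pairing ⋀³(V^∨) × ⋀³V → ℂ) is a Lagrangian subspace of (⋀³(V^∨), σ^∨). -/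
open ExteriorAlgebra

section helpers

open Module

/-- Abstract linear algebra behind the statement. -/
lemma lagr_core {X Y : Type*} [AddCommGroup X] [Module ℂ X] [FiniteDimensional ℂ X]
    [AddCommGroup Y] [Module ℂ Y] [FiniteDimensional ℂ Y]
    (hX : finrank ℂ X = 20)
    (P : Y →ₗ[ℂ] Dual ℂ X) (hP : Function.Bijective P)
    (S : X → X → ℂ) (T : Y → Y → ℂ) (sh : Y →ₗ[ℂ] X) (c d : ℂ) (hc : c ≠ 0)
    (hS : ∀ ψ a, S (sh ψ) a = c * P ψ a) (hT : ∀ ψ χ, T ψ χ = d * P ψ (sh χ))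
    (hS0 : ∀ a, S 0 a = 0)
    (A : Submodule ℂ X) (hA : finrank ℂ A = 10) (hAl : ∀ x ∈ A, ∀ y ∈ A, S x y = 0) :
    finrank ℂ (A.dualAnnihilator.comap P) = 10 ∧
    ∀ ψ ∈ A.dualAnnihilator.comap P, ∀ χ ∈ A.dualAnnihilator.comap P, T ψ χ = 0 := by
  let e := LinearEquiv.ofBijective P hP
  have hY : finrank ℂ Y = finrank ℂ X := by
    rw [e.finrank_eq, Subspace.dual_finrank_eq]
  have hN : finrank ℂ (A.dualAnnihilator.comap P) = 10 := by
    have h1 := Subspace.finrank_add_finrank_dualAnnihilator_eq A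
    have h2 : A.dualAnnihilator.comap P = A.dualAnnihilator.map e.symm.toLinearMap := by
      rw [← Submodule.comap_equiv_eq_map_symm]; rfl
    rw [h2]
    have h3 := LinearEquiv.finrank_map_eq e.symm A.dualAnnihilator
    have h4 : finrank ℂ (A.dualAnnihilator.map e.symm.toLinearMap) =
      finrank ℂ A.dualAnnihilator := h3
    omega
  refine ⟨hN, ?_⟩
  have hinj : Function.Injective sh := by
    rw [injective_iff_map_eq_zero]
    intro ψ hψ
    apply hP.1
    rw [map_zero]
    ext a
    have := hS ψ a
    rw [hψ, hS0] at this
    simpa [hc] using this.symm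
  have hsurj : Function.Surjective sh :=
    (LinearMap.injective_iff_surjective_of_finrank_eq_finrank hY).1 hinj
  have hle : A ≤ (A.dualAnnihilator.comap P).map sh := by
    intro a ha
    obtain ⟨ψ, rfl⟩ := hsurj a
    refine ⟨ψ, ?_, rfl⟩
    rw [SetLike.mem_coe, Submodule.mem_comap, Submodule.mem_dualAnnihilator]
    intro b hb
    have := hS ψ b
    rw [hAl _ ha _ hb] at this
    simpa [hc] using this.symm
  have heq : A = (A.dualAnnihilator.comap P).map sh := by
    apply Submodule.eq_of_le_of_finrank_eq hle
    rw [hA, ← (Submodule.equivMapOfInjective sh hinj _).finrank_eq, hN]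
  intro ψ hψ χ hχ
  rw [hT]
  have : sh χ ∈ A := by rw [heq]; exact ⟨χ, hχ, rfl⟩
  rw [Submodule.mem_comap, Submodule.mem_dualAnnihilator] at hψ
  rw [hψ _ this, mul_zero]

/-- The determinant of the 0/1 matrix of a self-map. -/
noncomputable def mdet (τ : Fin 6 → Fin 6) : ℂ :=
  Matrix.det (Matrix.of fun i j => if τ i = j then (1 : ℂ) else 0)

lemma mdet_not_inj (τ : Fin 6 → Fin 6) (h : ¬ Function.Injective τ) : mdet τ = 0 := by
  simp only [Function.Injective] at h
  push Not at h
  obtain ⟨i, j, hij, hne⟩ := h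
  exact Matrix.det_zero_of_row_eq hne (by ext k; simp [hij])

lemma mdet_inj (τ : Fin 6 → Fin 6) (h : Function.Injective τ) : mdet τ * mdet τ = 1 := by
  let σ : Equiv.Perm (Fin 6) := Equiv.ofBijective τ (Finite.injective_iff_bijective.1 h)
  have : mdet τ = (Equiv.Perm.sign σ : ℤ) := by
    rw [← Matrix.det_permutation]
    unfold mdet
    congr 1
    ext i j
    simp [Equiv.Perm.permMatrix, PEquiv.toMatrix_apply, σ, eq_comm]
  rw [this]
  rcases Int.units_eq_one_or (Equiv.Perm.sign σ) with h | h <;> simp [h]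

abbrev Idx := Set.powersetCard (Fin 6) 3

/-- index map of a pair of 3-subsets -/
def idx (s t : Idx) : Fin 6 → Fin 6 :=
  Fin.append (m := 3) (n := 3) (Set.powersetCard.ofFinEmbEquiv.symm s)
    (Set.powersetCard.ofFinEmbEquiv.symm t)

lemma idx_inj (s t : Idx) :
    Function.Injective (idx s t) ↔ Set.powersetCard.compl (by simp) s = t := by
  have : Function.Injective (idx s t) ↔ ∀ a ∈ s, a ∉ t := by
    unfold idx
    rw [Fin.append_injective_iff]
    simp only [← Set.powersetCard.mem_range_ofFinEmbEquiv_symm_iff_mem]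
    constructor
    · rintro ⟨-, -, h⟩ a ⟨i, rfl⟩ ⟨j, hj⟩
      exact h i j hj.symm
    · intro h
      refine ⟨RelEmbedding.injective _, RelEmbedding.injective _, fun i j hij => ?_⟩
      exact h _ ⟨i, rfl⟩ ⟨j, hij.symm⟩
  rw [this, eq_comm, Set.powersetCard.eq_iff_subset]
  constructor
  · intro h a ha
    rw [Set.powersetCard.mem_coe_iff] at ha ⊢
    rw [Set.powersetCard.mem_compl]
    exact fun h' => h a h' ha
  · intro h a ha hat
    have := h hat
    rw [Set.powersetCard.mem_coe_iff, Set.powersetCard.mem_compl] at this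
    exact this ha

lemma sum_mdet (s t : Idx) :
    ∑ u : Idx, mdet (idx u s) * mdet (idx u t) = if s = t then 1 else 0 := by
  split_ifs with h
  · subst h
    rw [Finset.sum_eq_single ((Set.powersetCard.compl (m := 3) (n := 3) (by simp)).symm s)]
    · exact mdet_inj _ (by rw [idx_inj]; simp)
    · intro u _ hu
      rw [mdet_not_inj, zero_mul]
      rw [idx_inj]
      rintro rfl
      simp at hu
    · simp
  · refine Finset.sum_eq_zero fun u _ => ?_
    by_cases h1 : Function.Injective (idx u s)
    · rw [mdet_not_inj (idx u t), mul_zero]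
      rw [idx_inj] at h1 ⊢
      rw [h1]; exact h
    · rw [mdet_not_inj _ h1, zero_mul]

lemma fam_mul {W : Type*} [AddCommGroup W] [Module ℂ W] (b : Fin 6 → W) (s t : Idx) :
    (exteriorPower.ιMulti_family ℂ 3 b s : ExteriorAlgebra ℂ W) *
      exteriorPower.ιMulti_family ℂ 3 b t = ExteriorAlgebra.ιMulti ℂ 6 (b ∘ idx s t) := by
  simp only [exteriorPower.ιMulti_family, exteriorPower.ιMulti_apply_coe,
    ExteriorAlgebra.ιMulti_apply]
  rw [← List.prod_append, ← List.ofFn_fin_append]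
  congr 2
  ext i
  unfold idx
  refine Fin.addCases (m := 3) (n := 3) (fun i => ?_) (fun i => ?_) i
  · rw [Fin.append_left]; simp only [Function.comp_apply]; erw [Fin.append_left]
  · rw [Fin.append_right]; simp only [Function.comp_apply]; erw [Fin.append_right]

lemma vol_fam {V : Type*} [AddCommGroup V] [Module ℂ V] (b : Basis (Fin 6) ℂ V)
    (vol : ExteriorAlgebra ℂ V →ₗ[ℂ] ℂ) (τ : Fin 6 → Fin 6) :
    vol (ExteriorAlgebra.ιMulti ℂ 6 (b ∘ τ)) = vol (ExteriorAlgebra.ιMulti ℂ 6 b) * mdet τ := by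
  have := AlternatingMap.eq_smul_basis_det b
    (vol.compAlternatingMap (ExteriorAlgebra.ιMulti ℂ 6))
  have h := DFunLike.congr_fun this (b ∘ τ)
  simp only [LinearMap.compAlternatingMap_apply, AlternatingMap.smul_apply, smul_eq_mul] at h
  rw [h, Basis.det_apply]
  congr 1
  rw [← Matrix.det_transpose]
  unfold mdet
  congr 1
  ext i j
  simp [Basis.toMatrix_apply, Finsupp.single_apply]

lemma p6_fam {V : Type*} [AddCommGroup V] [Module ℂ V] (b : Basis (Fin 6) ℂ V)
    (p6 : ExteriorAlgebra ℂ (Module.Dual ℂ V) →ₗ[ℂ] ExteriorAlgebra ℂ V →ₗ[ℂ] ℂ)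
    (hp6 : ∀ (f : Fin 6 → Module.Dual ℂ V) (v : Fin 6 → V),
      p6 ((List.ofFn fun i => ι ℂ (f i)).prod) ((List.ofFn fun i => ι ℂ (v i)).prod) =
        Matrix.det (Matrix.of fun i j => f i (v j))) (τ : Fin 6 → Fin 6) :
    p6 (ExteriorAlgebra.ιMulti ℂ 6 (b.dualBasis ∘ τ)) (ExteriorAlgebra.ιMulti ℂ 6 b) =
      mdet τ := by
  rw [ExteriorAlgebra.ιMulti_apply, ExteriorAlgebra.ιMulti_apply, hp6]
  unfold mdet
  congr 1
  ext i j
  simp [Finsupp.single_apply, eq_comm]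

lemma p3_eq {V : Type*} [AddCommGroup V] [Module ℂ V]
    (p3 : ExteriorAlgebra ℂ (Module.Dual ℂ V) →ₗ[ℂ] ExteriorAlgebra ℂ V →ₗ[ℂ] ℂ)
    (hp3 : ∀ (f : Fin 3 → Module.Dual ℂ V) (v : Fin 3 → V),
      p3 ((List.ofFn fun i => ι ℂ (f i)).prod) ((List.ofFn fun i => ι ℂ (v i)).prod) =
        Matrix.det (Matrix.of fun i j => f i (v j)))
    (ψ : ⋀[ℂ]^3 (Module.Dual ℂ V)) (a : ⋀[ℂ]^3 V) :
    p3 ψ a = exteriorPower.pairingDual ℂ V 3 ψ a := by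
  have : (p3.compl₁₂ (Submodule.subtype (⋀[ℂ]^3 (Module.Dual ℂ V)))
      (Submodule.subtype (⋀[ℂ]^3 V))) = exteriorPower.pairingDual ℂ V 3 := by
    ext f v
    simp only [LinearMap.compAlternatingMap_apply, LinearMap.compl₁₂_apply,
      Submodule.subtype_apply, exteriorPower.pairingDual_ιMulti_ιMulti,
      exteriorPower.ιMulti_apply_coe, ExteriorAlgebra.ιMulti_apply]
    rw [hp3, ← Matrix.det_transpose]
    rfl
  rw [← this]
  rfl

lemma pairing_fam {V : Type*} [AddCommGroup V] [Module ℂ V] (b : Basis (Fin 6) ℂ V) (s t : Idx) :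
    exteriorPower.pairingDual ℂ V 3 (b.dualBasis.exteriorPower 3 s) (b.exteriorPower 3 t) =
      if s = t then 1 else 0 := by
  rw [exteriorPower.basis_apply, Basis.coe_dualBasis]
  change exteriorPower.ιMultiDual ℂ 3 b s _ = _
  rw [← exteriorPower.basis_coord, Basis.coord_apply, Basis.repr_self, Finsupp.single_apply]
  simp only [eq_comm]

lemma pairing_bij {V : Type*} [AddCommGroup V] [Module ℂ V] (b : Basis (Fin 6) ℂ V) :
    Function.Bijective (exteriorPower.pairingDual ℂ V 3) := by
  let e := (b.dualBasis.exteriorPower 3).equiv (b.exteriorPower 3).dualBasis (Equiv.refl _)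
  have : exteriorPower.pairingDual ℂ V 3 = e.toLinearMap := by
    refine (b.dualBasis.exteriorPower 3).ext fun s => (b.exteriorPower 3).ext fun t => ?_
    rw [pairing_fam]
    simp only [e, LinearEquiv.coe_coe, Basis.equiv_apply, Equiv.refl_apply,
      Basis.dualBasis_apply_self, eq_comm]
  rw [this]
  exact e.bijective

end helpers

/-- Let `σ^∨` be the form on `⋀³(V^∨)` given by
`σ^∨(ψ,χ) = ⟨ψ∧χ, ω₀⟩` where `vol ω₀ = 1`, the pairings `p3 : ⋀³(V^∨) × ⋀³V → ℂ` and
`p6 : ⋀⁶(V^∨) × ⋀⁶V → ℂ` being the canonical determinant pairings. If `A ⊆ ⋀³V` is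
Lagrangian for `σ(α,β) = vol(α∧β)`, then the annihilator
`A^⊥ = {ψ ∈ ⋀³(V^∨) : ⟨ψ,a⟩ = 0 ∀ a ∈ A}` is a Lagrangian subspace of
`(⋀³(V^∨), σ^∨)`: it lies in `⋀³(V^∨)`, has dimension 10 and `σ^∨` vanishes on it. -/
theorem stmt14 (V : Type*) [AddCommGroup V] [Module ℂ V] [FiniteDimensional ℂ V]
    (hV : Module.finrank ℂ V = 6)
    (vol : ExteriorAlgebra ℂ V →ₗ[ℂ] ℂ)
    (hvol : Function.Bijective fun x : ⋀[ℂ]^6 V => vol x)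
    (ω₀ : ExteriorAlgebra ℂ V) (hω₀ : ω₀ ∈ ⋀[ℂ]^6 V) (hω₀vol : vol ω₀ = 1)
    (p3 : ExteriorAlgebra ℂ (Module.Dual ℂ V) →ₗ[ℂ] ExteriorAlgebra ℂ V →ₗ[ℂ] ℂ)
    (hp3 : ∀ (f : Fin 3 → Module.Dual ℂ V) (v : Fin 3 → V),
      p3 ((List.ofFn fun i => ι ℂ (f i)).prod) ((List.ofFn fun i => ι ℂ (v i)).prod) =
        Matrix.det (Matrix.of fun i j => f i (v j)))
    (p6 : ExteriorAlgebra ℂ (Module.Dual ℂ V) →ₗ[ℂ] ExteriorAlgebra ℂ V →ₗ[ℂ] ℂ)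
    (hp6 : ∀ (f : Fin 6 → Module.Dual ℂ V) (v : Fin 6 → V),
      p6 ((List.ofFn fun i => ι ℂ (f i)).prod) ((List.ofFn fun i => ι ℂ (v i)).prod) =
        Matrix.det (Matrix.of fun i j => f i (v j)))
    (A : Submodule ℂ (ExteriorAlgebra ℂ V))
    (hA3 : A ≤ ⋀[ℂ]^3 V) (hA10 : Module.finrank ℂ A = 10)
    (hAlag : ∀ x ∈ A, ∀ y ∈ A, vol (x * y) = 0) :
    (⋀[ℂ]^3 (Module.Dual ℂ V) ⊓ ⨅ a ∈ A, LinearMap.ker (p3.flip a)) ≤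
        ⋀[ℂ]^3 (Module.Dual ℂ V) ∧
    Module.finrank ℂ
      ↥(⋀[ℂ]^3 (Module.Dual ℂ V) ⊓ ⨅ a ∈ A, LinearMap.ker (p3.flip a)) = 10 ∧
    ∀ ψ ∈ ⋀[ℂ]^3 (Module.Dual ℂ V) ⊓ ⨅ a ∈ A, LinearMap.ker (p3.flip a),
      ∀ χ ∈ ⋀[ℂ]^3 (Module.Dual ℂ V) ⊓ ⨅ a ∈ A, LinearMap.ker (p3.flip a),
        p6 (ψ * χ) ω₀ = 0 := by
  classical
  let b : Module.Basis (Fin 6) ℂ V := Module.finBasisOfFinrankEq ℂ V hV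
  let E := b.exteriorPower 3
  let F := b.dualBasis.exteriorPower 3
  have hE : ∀ s, (E s : ExteriorAlgebra ℂ V) = exteriorPower.ιMulti_family ℂ 3 b s := fun s => by
    rw [exteriorPower.basis_apply]
  have hF : ∀ s, (F s : ExteriorAlgebra ℂ (Module.Dual ℂ V)) =
      exteriorPower.ιMulti_family ℂ 3 b.dualBasis s := fun s => by
    rw [exteriorPower.basis_apply]
  let P := exteriorPower.pairingDual ℂ V 3
  let w := ExteriorAlgebra.ιMulti ℂ 6 b
  have hw6 : w ∈ ⋀[ℂ]^6 V := (exteriorPower.ιMulti ℂ 6 b).2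
  let c := vol w
  have hc : c ≠ 0 := by
    intro h0
    have h1 : (⟨w, hw6⟩ : ⋀[ℂ]^6 V) = 0 := hvol.1 (by simpa using h0)
    have h2 : w = 0 := congrArg Subtype.val h1
    have h3 := p6_fam b p6 hp6 id
    have h4 := mdet_inj id Function.injective_id
    change p6 _ w = _ at h3
    rw [h2, map_zero] at h3
    rw [← h3] at h4
    simp at h4
  have hω : ω₀ = c⁻¹ • w := by
    have h1 : (⟨ω₀, hω₀⟩ : ⋀[ℂ]^6 V) = ⟨c⁻¹ • w, Submodule.smul_mem _ _ hw6⟩ :=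
      hvol.1 (by
        change vol ω₀ = vol (c⁻¹ • w)
        rw [hω₀vol, map_smul, smul_eq_mul]
        exact (inv_mul_cancel₀ hc).symm)
    exact congrArg Subtype.val h1
  let sh : ⋀[ℂ]^3 (Module.Dual ℂ V) →ₗ[ℂ] ⋀[ℂ]^3 V :=
    F.constr ℂ fun s => ∑ u : Idx, mdet (idx u s) • E u
  have hsh : ∀ s, sh (F s) = ∑ u : Idx, mdet (idx u s) • E u := fun s => F.constr_basis ℂ _ s
  have hS : ∀ (ψ : ⋀[ℂ]^3 (Module.Dual ℂ V)) (a : ⋀[ℂ]^3 V),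
      vol ((sh ψ : ExteriorAlgebra ℂ V) * a) = c * P ψ a := by
    let L : ⋀[ℂ]^3 (Module.Dual ℂ V) →ₗ[ℂ] ⋀[ℂ]^3 V →ₗ[ℂ] ℂ :=
      ((LinearMap.mul ℂ (ExteriorAlgebra ℂ V)).compr₂ vol).compl₁₂
        ((Submodule.subtype _).comp sh) (Submodule.subtype _)
    have hL : L = c • P := by
      refine F.ext fun s => E.ext fun t => ?_
      change vol ((sh (F s) : ExteriorAlgebra ℂ V) * E t) = c * P (F s) (E t)
      rw [hsh, pairing_fam, ← sum_mdet, Submodule.coe_sum, Finset.sum_mul, map_sum,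
        Finset.mul_sum]
      refine Finset.sum_congr rfl fun u _ => ?_
      rw [Submodule.coe_smul, smul_mul_assoc, map_smul, hE, hE, fam_mul, vol_fam, smul_eq_mul]
      change _ * (c * _) = _
      ring
    intro ψ a
    exact DFunLike.congr_fun (DFunLike.congr_fun hL ψ) a
  have hT : ∀ (ψ χ : ⋀[ℂ]^3 (Module.Dual ℂ V)),
      p6 ((ψ : ExteriorAlgebra ℂ (Module.Dual ℂ V)) * χ) ω₀ = c⁻¹ * P ψ (sh χ) := by
    let L : ⋀[ℂ]^3 (Module.Dual ℂ V) →ₗ[ℂ] ⋀[ℂ]^3 (Module.Dual ℂ V) →ₗ[ℂ] ℂ :=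
      ((LinearMap.mul ℂ (ExteriorAlgebra ℂ (Module.Dual ℂ V))).compr₂ (p6.flip ω₀)).compl₁₂
        (Submodule.subtype _) (Submodule.subtype _)
    have hL : L = c⁻¹ • P.compl₂ sh := by
      refine F.ext fun s => F.ext fun t => ?_
      change p6 ((F s : ExteriorAlgebra ℂ (Module.Dual ℂ V)) * F t) ω₀ =
        c⁻¹ * P (F s) (sh (F t))
      rw [hsh, hω, hF, hF, fam_mul, map_smul, smul_eq_mul, p6_fam b p6 hp6, map_sum]
      congr 1
      rw [Finset.sum_eq_single s]
      · rw [map_smul, pairing_fam]; simp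
      · intro u _ hu
        rw [map_smul, pairing_fam, if_neg (Ne.symm hu), smul_zero]
      · simp
    intro ψ a
    exact DFunLike.congr_fun (DFunLike.congr_fun hL ψ) a
  let A0 : Submodule ℂ (⋀[ℂ]^3 V) := A.comap (Submodule.subtype _)
  have hA0 : Module.finrank ℂ A0 = 10 := by
    rw [← hA10]
    exact (Submodule.comapSubtypeEquivOfLe hA3).finrank_eq
  have hX : Module.finrank ℂ (⋀[ℂ]^3 V) = 20 := by
    rw [exteriorPower.finrank_eq, hV]; rfl
  obtain ⟨h1, h2⟩ := lagr_core hX P (pairing_bij b)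
    (fun x y => vol ((x : ExteriorAlgebra ℂ V) * y))
    (fun ψ χ => p6 ((ψ : ExteriorAlgebra ℂ (Module.Dual ℂ V)) * χ) ω₀) sh c c⁻¹ hc hS hT
    (fun a => by simp) A0 hA0 (fun x hx y hy => hAlag _ hx _ hy)
  have hN : (⋀[ℂ]^3 (Module.Dual ℂ V) ⊓ ⨅ a ∈ A, LinearMap.ker (p3.flip a)) =
      (A0.dualAnnihilator.comap P).map (Submodule.subtype _) := by
    ext ψ
    simp only [Submodule.mem_inf, Submodule.mem_iInf, LinearMap.mem_ker, LinearMap.flip_apply,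
      Submodule.mem_map, Submodule.mem_comap, Submodule.mem_dualAnnihilator]
    constructor
    · rintro ⟨h, h'⟩
      exact ⟨⟨ψ, h⟩, fun a ha => by rw [← p3_eq p3 hp3]; exact h' _ ha, rfl⟩
    · rintro ⟨ψ, h, rfl⟩
      refine ⟨ψ.2, fun a ha => ?_⟩
      exact (p3_eq p3 hp3 ψ ⟨a, hA3 ha⟩).trans (h ⟨a, hA3 ha⟩ ha)
  refine ⟨inf_le_left, ?_, ?_⟩
  · rw [hN, ← (Submodule.equivMapOfInjective _ (Submodule.subtype_injective _) _).finrank_eq, h1]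
  · rw [hN]
    rintro _ ⟨ψ, hψ, rfl⟩ _ ⟨χ, hχ, rfl⟩
    exact h2 ψ hψ χ hχ
end

section
/- For every Lagrangian subspace A of (⋀³V, σ) there exists a nonzero vector v ∈ V such that A ∩ F_v ≠ {0}. (Equivalently: the EPW sextic Y_A = {[v] ∈ ℙ(V) : A ∩ F_v ≠ 0} is never empty.) -/
open ExteriorAlgebra

/-- Contraction with a linear form, as a linear endomorphism of the exterior algebra. -/
theorem exists_contraction {V : Type*} [AddCommGroup V] [Module ℂ V] (d : V →ₗ[ℂ] ℂ) :
    ∃ D : ExteriorAlgebra ℂ V →ₗ[ℂ] ExteriorAlgebra ℂ V,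
      (∀ v x, D (ι ℂ v * x) = d v • x - ι ℂ v * D x) ∧
      (∀ x ∈ ⋀[ℂ]^2 V, D x ∈ (LinearMap.ker d).map (ι ℂ)) := by
  have h1 : ∀ v x, CliffordAlgebra.contractLeft (Q := (0 : QuadraticForm ℂ V)) d
      (ι ℂ v * x) = d v • x - ι ℂ v * CliffordAlgebra.contractLeft d x :=
    fun v x => CliffordAlgebra.contractLeft_ι_mul d v x
  refine ⟨CliffordAlgebra.contractLeft (Q := (0 : QuadraticForm ℂ V)) d, h1, ?_⟩
  intro x hx
  rw [exteriorPower, pow_two] at hx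
  refine Submodule.mul_induction_on hx ?_ ?_
  · rintro _ ⟨a, rfl⟩ _ ⟨b, rfl⟩
    refine ⟨d a • b - d b • a, ?_, ?_⟩
    · simp [mul_comm]
    · rw [h1]
      have h2 : CliffordAlgebra.contractLeft (Q := (0 : QuadraticForm ℂ V)) d (ι ℂ b) =
          algebraMap ℂ _ (d b) := CliffordAlgebra.contractLeft_ι _ d b
      rw [h2, map_sub, map_smul, map_smul, ← Algebra.commutes, ← Algebra.smul_def]
  · intro x y hx hy
    rw [map_add]
    exact add_mem hx hy

theorem ι_mul_mem_succ {V : Type*} [AddCommGroup V] [Module ℂ V] (n : ℕ) (v : V)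
    {x : ExteriorAlgebra ℂ V} (hx : x ∈ ⋀[ℂ]^n V) : ι ℂ v * x ∈ ⋀[ℂ]^(n+1) V := by
  rw [exteriorPower, pow_succ']
  exact Submodule.mul_mem_mul ⟨v, rfl⟩ hx

theorem ι_anticomm {V : Type*} [AddCommGroup V] [Module ℂ V] (v w : V) :
    ι ℂ v * ι ℂ w = - (ι ℂ w * ι ℂ v) :=
  eq_neg_of_add_eq_zero_left (ι_add_mul_swap v w)

/-- For every Lagrangian subspace `A` of `(⋀³V, σ)` there is a nonzero
`v ∈ V` with `A ∩ F_v ≠ 0`; i.e. the EPW sextic `Y_A` is never empty. -/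
theorem stmt16 (V : Type*) [AddCommGroup V] [Module ℂ V] [FiniteDimensional ℂ V]
    (hV : Module.finrank ℂ V = 6)
    (vol : ExteriorAlgebra ℂ V →ₗ[ℂ] ℂ)
    (hvol : Function.Bijective fun x : ⋀[ℂ]^6 V => vol x)
    (A : Submodule ℂ (ExteriorAlgebra ℂ V))
    (hA3 : A ≤ ⋀[ℂ]^3 V) (hA10 : Module.finrank ℂ A = 10)
    (hAlag : ∀ x ∈ A, ∀ y ∈ A, vol (x * y) = 0) :
    ∃ v : V, v ≠ 0 ∧ A ⊓ Fsub v ≠ ⊥ := by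
  by_contra hcon
  push Not at hcon
  -- two dual pairs
  let b := Module.finBasisOfFinrankEq ℂ V hV
  obtain ⟨D0, hD0, hD0'⟩ := exists_contraction (b.coord 0)
  obtain ⟨D1, hD1, hD1'⟩ := exists_contraction (b.coord 1)
  set e0 := b 0 with he0
  set e1 := b 1 with he1
  have h00 : b.coord 0 e0 = 1 := by simp [he0]
  have h10 : b.coord 1 e0 = 0 := by simp [he0]
  have h11 : b.coord 1 e1 = 1 := by simp [he1]
  have hne1 : e1 ≠ 0 := b.ne_zero 1
  have hsq : ∀ v : V, ∀ x : ExteriorAlgebra ℂ V, ι ℂ v * (ι ℂ v * x) = 0 := by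
    intro v x
    rw [← mul_assoc, ι_sq_zero, zero_mul]
  have hdim2 : Module.finrank ℂ (⋀[ℂ]^2 V) = 15 := by
    rw [exteriorPower.finrank_eq, hV]; rfl
  have hdim3 : Module.finrank ℂ (⋀[ℂ]^3 V) = 20 := by
    rw [exteriorPower.finrank_eq, hV]; rfl
  -- the space `K` of bivectors killed by `D1`
  let K : Submodule ℂ (ExteriorAlgebra ℂ V) := ⋀[ℂ]^2 V ⊓ LinearMap.ker D1
  have : FiniteDimensional ℂ K := Submodule.finiteDimensional_of_le (S₂ := ⋀[ℂ]^2 V) inf_le_left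
  have hKd : 10 ≤ Module.finrank ℂ K := by
    let f := D1.domRestrict (⋀[ℂ]^2 V)
    have hr := LinearMap.finrank_range_add_finrank_ker f
    have hker : Module.finrank ℂ (LinearMap.ker f) ≤ Module.finrank ℂ K := by
      have : (LinearMap.ker f).map (Submodule.subtype _) ≤ K := by
        rintro _ ⟨x, hx, rfl⟩
        exact ⟨x.2, hx⟩
      have h3 := Submodule.finrank_mono this
      rwa [Submodule.finrank_map_subtype_eq] at h3
    have hran : Module.finrank ℂ (LinearMap.range f) ≤ 5 := by
      have h1 : LinearMap.range f ≤ (LinearMap.ker (b.coord 1)).map (ι ℂ) := by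
        rintro _ ⟨x, rfl⟩
        exact hD1' x x.2
      have h2 : Module.finrank ℂ (LinearMap.ker (b.coord 1)) ≤ 5 := by
        have hlt : LinearMap.ker (b.coord 1) < ⊤ := by
          refine lt_top_iff_ne_top.2 fun h => ?_
          have : e1 ∈ LinearMap.ker (b.coord 1) := h ▸ Submodule.mem_top
          rw [LinearMap.mem_ker, h11] at this
          exact one_ne_zero this
        have := Submodule.finrank_lt hlt.ne
        omega
      exact (Submodule.finrank_mono h1).trans ((Submodule.finrank_map_le _ _).trans h2)
    omega
  -- left multiplication by `e1` is injective on `K`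
  have hinj : ∀ x, D1 x = 0 → ι ℂ e1 * x = 0 → x = 0 := by
    intro x hx h
    have := hD1 e1 x
    rw [h, hx, h11] at this
    simpa using this.symm
  have hK2 : ∀ x ∈ K, x ∈ ⋀[ℂ]^2 V := fun x hx => hx.1
  have hK1 : ∀ x ∈ K, D1 x = 0 := fun x hx => hx.2
  have hAF : ∀ v : V, v ≠ 0 → ∀ x ∈ ⋀[ℂ]^2 V, ι ℂ v * x ∈ A → ι ℂ v * x = 0 := by
    intro v hv x hx hxA
    have : ι ℂ v * x ∈ A ⊓ Fsub v := ⟨hxA, x, hx, rfl⟩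
    rw [hcon v hv] at this
    exact this
  let L1 : K →ₗ[ℂ] ExteriorAlgebra ℂ V := (LinearMap.mulLeft ℂ (ι ℂ e1)).domRestrict K
  let L0 : K →ₗ[ℂ] ExteriorAlgebra ℂ V := (LinearMap.mulLeft ℂ (ι ℂ e0)).domRestrict K
  have hL1inj : Function.Injective L1 := by
    rw [injective_iff_map_eq_zero]
    intro x hx
    exact Subtype.ext (hinj x (hK1 x x.2) hx)
  let g : K →ₗ[ℂ] (ExteriorAlgebra ℂ V ⧸ A) := A.mkQ ∘ₗ L1
  let h : K →ₗ[ℂ] (ExteriorAlgebra ℂ V ⧸ A) := A.mkQ ∘ₗ L0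
  have hg : Function.Injective g := by
    rw [injective_iff_map_eq_zero]
    intro x hx
    have hx' : ι ℂ e1 * (x : ExteriorAlgebra ℂ V) ∈ A := (Submodule.Quotient.mk_eq_zero A).1 hx
    exact Subtype.ext (hinj x (hK1 x x.2) (hAF e1 hne1 x (hK2 x x.2) hx'))
  have : FiniteDimensional ℂ A := Submodule.finiteDimensional_of_le hA3
  have hsup : A ⊔ LinearMap.range L1 = ⋀[ℂ]^3 V := by
    have hle : A ⊔ LinearMap.range L1 ≤ ⋀[ℂ]^3 V := by
      refine sup_le hA3 ?_
      rintro _ ⟨x, rfl⟩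
      exact ι_mul_mem_succ 2 e1 (hK2 x x.2)
    refine Submodule.eq_of_le_of_finrank_le hle ?_
    have h1 := Submodule.finrank_sup_add_finrank_inf_eq A (LinearMap.range L1)
    have h2 : A ⊓ LinearMap.range L1 = ⊥ := by
      rw [eq_bot_iff]
      rintro _ ⟨hxA, x, rfl⟩
      exact hAF e1 hne1 x (hK2 x x.2) hxA
    have h3 := LinearMap.finrank_range_of_inj hL1inj
    rw [h2, finrank_bot] at h1
    omega
  have hrange : ∀ x, h x ∈ LinearMap.range g := by
    intro x
    have : L0 x ∈ A ⊔ LinearMap.range L1 := by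
      rw [hsup]
      exact ι_mul_mem_succ 2 e0 (hK2 x x.2)
    obtain ⟨a, ha, _, ⟨y, rfl⟩, hy⟩ := Submodule.mem_sup.1 this
    refine ⟨y, ?_⟩
    change A.mkQ (L1 y) = A.mkQ (L0 x)
    rw [← hy, map_add]
    simp [ha]
  let T : K →ₗ[ℂ] K := (LinearEquiv.ofInjective g hg).symm.toLinearMap ∘ₗ h.codRestrict _ hrange
  have hT : ∀ x, g (T x) = h x := by
    intro x
    have := LinearEquiv.apply_symm_apply (LinearEquiv.ofInjective g hg) (h.codRestrict _ hrange x)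
    exact congrArg Subtype.val this
  let R : Submodule ℂ K := LinearMap.ker L0
  have hRdiv : ∀ x : K, L0 x = 0 → ∃ w : V, (x : ExteriorAlgebra ℂ V) = ι ℂ e0 * ι ℂ w := by
    intro x hx
    obtain ⟨w, -, hw⟩ := hD0' x (hK2 x x.2)
    refine ⟨w, ?_⟩
    have := hD0 e0 x
    have hx' : ι ℂ e0 * (x : ExteriorAlgebra ℂ V) = 0 := hx
    rw [hx', map_zero, h00, one_smul] at this
    rw [hw]
    exact (sub_eq_zero.1 this.symm)
  have hRtop : R ≠ ⊤ := by
    intro hR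
    have hle : K ≤ LinearMap.range ((LinearMap.mulLeft ℂ (ι ℂ e0)) ∘ₗ (ι ℂ : V →ₗ[ℂ] _)) := by
      intro x hx
      have : (⟨x, hx⟩ : K) ∈ R := hR ▸ Submodule.mem_top
      obtain ⟨w, hw⟩ := hRdiv ⟨x, hx⟩ this
      exact ⟨w, hw.symm⟩
    have h1 := Submodule.finrank_mono hle
    have h2 := LinearMap.finrank_range_le
      ((LinearMap.mulLeft ℂ (ι ℂ e0)) ∘ₗ (ι ℂ : V →ₗ[ℂ] ExteriorAlgebra ℂ V))
    omega
  have hTR : R ≤ R.comap T := by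
    intro x hx
    have hx0 : L0 x = 0 := hx
    have : T x = 0 := by
      apply hg
      rw [hT, map_zero]
      change A.mkQ (L0 x) = 0
      rw [hx0, map_zero]
    rw [Submodule.mem_comap, this]
    exact zero_mem _
  have : Nontrivial (K ⧸ R) := Submodule.Quotient.nontrivial_iff.2 hRtop
  obtain ⟨c, hc⟩ := Module.End.exists_eigenvalue (K := ℂ) (R.mapQ R T hTR)
  obtain ⟨q, hq⟩ := hc.exists_hasEigenvector
  obtain ⟨β, rfl⟩ := R.mkQ_surjective q
  have hβR : L0 β ≠ 0 := fun h0 => hq.2 ((Submodule.Quotient.mk_eq_zero R).2 h0)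
  have hr : T β - c • β ∈ R := by
    have := hq.apply_eq_smul
    rw [Submodule.mkQ_apply, Submodule.mapQ_apply, ← Submodule.Quotient.mk_smul] at this
    exact (Submodule.Quotient.eq R).1 this
  obtain ⟨w, hw⟩ := hRdiv _ hr
  have hmem : L0 β - L1 (T β) ∈ A := (Submodule.Quotient.eq A).1 (hT β).symm
  have hL1T : L1 (T β) = ι ℂ e1 * (ι ℂ e0 * ι ℂ w) + c • (ι ℂ e1 * (β : ExteriorAlgebra ℂ V)) := by
    have h1 : T β = (T β - c • β) + c • β := by abel
    rw [h1, map_add, map_smul]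
    congr 1
    exact congrArg (ι ℂ e1 * ·) hw
  have key : L0 β - L1 (T β) =
      ι ℂ (e0 - c • e1) * ((β : ExteriorAlgebra ℂ V) + ι ℂ e1 * ι ℂ w) := by
    rw [hL1T, ← mul_assoc (ι ℂ e1), ι_anticomm e1 e0]
    change ι ℂ e0 * (β : ExteriorAlgebra ℂ V) - _ = _
    rw [map_sub, map_smul, sub_mul, mul_add, mul_add, smul_mul_assoc, smul_mul_assoc, hsq,
      smul_zero, neg_mul, mul_assoc]
    abel
  have hv : e0 - c • e1 ≠ 0 := by
    intro h0
    have := congrArg (b.coord 0) h0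
    rw [map_sub, map_smul, h00] at this
    simp [he1] at this
  have hmem2 : (β : ExteriorAlgebra ℂ V) + ι ℂ e1 * ι ℂ w ∈ ⋀[ℂ]^2 V := by
    refine add_mem (hK2 β β.2) (ι_mul_mem_succ 1 e1 ?_)
    rw [exteriorPower, pow_one]
    exact ⟨w, rfl⟩
  rw [key] at hmem
  have hz := hAF _ hv _ hmem2 hmem
  apply hβR
  change ι ℂ e0 * (β : ExteriorAlgebra ℂ V) = 0
  apply hinj
  · rw [hD1, h10, hK1 β β.2]; simp
  · have := congrArg (ι ℂ e1 * ·) (key.trans hz)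
    simp only [hL1T, mul_sub, mul_add, mul_smul_comm, hsq, mul_zero, smul_zero, add_zero,
      sub_zero] at this
    exact this
end
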